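/- arXiv:quant-ph/0502064 — 2 statements merged into one kernel-verified Lean document; each statement's English description precedes it below -/
import Mathlib

section
/- Let ℓ ≥ 1 and let 0 ≤ ε ≤ 1/2. Let P be a joint probability distribution of two random variables S_A, S_B taking values in {0,1}^ℓ, and suppose that (1/2)·Σ_{s_A, s_B} |P(s_A, s_B) − 2^{−ℓ}·[s_A = s_B]| ≤ ε, i.e., P is within statistical distance ε of the distribution of a perfect key pair (uniform on {0,1}^ℓ and identical on both sides). Then the mutual information satisfies I(S_A; S_B) ≥ (1 − ε − 2h(ε))·ℓ, where h is the binary entropy function. -/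
open scoped Matrix Kronecker BigOperators ComplexOrder
open Matrix

noncomputable section

/-- The outer product `|v⟩⟨v|` of a vector. -/
def outerPr {n : Type*} (v : n → ℂ) : Matrix n n ℂ :=
  Matrix.of fun i j => v i * star (v j)

/-- A density operator: positive semidefinite with trace one. -/
def IsDensity {n : Type*} [Fintype n] [DecidableEq n] (ρ : Matrix n n ℂ) : Prop :=
  ρ.PosSemidef ∧ ρ.trace = 1

/-- The eigenvalues of a matrix (as a real vector), `0` if the matrix is not Hermitian. -/
def eigs {n : Type*} [Fintype n] [DecidableEq n] (ρ : Matrix n n ℂ) : n → ℝ :=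
  if h : ρ.IsHermitian then h.eigenvalues else 0

/-- Trace distance `δ(ρ,σ) = (1/2) tr|ρ-σ|`. -/
def traceDist {n : Type*} [Fintype n] [DecidableEq n] (ρ σ : Matrix n n ℂ) : ℝ :=
  (1 / 2) * ∑ i, |eigs (ρ - σ) i|

/-- Von Neumann entropy (base 2). -/
def vnEntropy {n : Type*} [Fintype n] [DecidableEq n] (ρ : Matrix n n ℂ) : ℝ :=
  ∑ i, -(eigs ρ i * Real.logb 2 (eigs ρ i))

/-- Partial trace over the second (right) tensor factor. -/
def ptraceR {m w : Type*} [Fintype w] (M : Matrix (m × w) (m × w) ℂ) : Matrix m m ℂ :=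
  Matrix.of fun i j => ∑ k, M (i, k) (j, k)

/-- Partial trace over the first (left) tensor factor. -/
def ptraceL {m w : Type*} [Fintype m] (M : Matrix (m × w) (m × w) ℂ) : Matrix w w ℂ :=
  Matrix.of fun i j => ∑ k, M (k, i) (k, j)

/-- `ψ` is a purification of `ρ`: a unit vector on `d × w` whose partial trace over `w`
equals `ρ`. -/
def IsPurification {d w : Type*} [Fintype d] [Fintype w]
    (ψ : d × w → ℂ) (ρ : Matrix d d ℂ) : Prop :=
  (∑ i, Complex.normSq (ψ i)) = 1 ∧ ptraceR (outerPr ψ) = ρ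

/-- ε-smooth Rényi entropy of order 0 of a distribution. -/
def H0smooth {X : Type*} [Fintype X] (P : X → ℝ) (ε : ℝ) : ℝ :=
  sInf { r : ℝ | ∃ Q : X → ℝ, (∀ x, 0 ≤ Q x) ∧ (∑ x, |P x - Q x|) ≤ ε ∧
    r = Real.logb 2 (Nat.card {x : X // Q x ≠ 0}) }

/-- ε-smooth Rényi entropy of order 2 of a distribution. -/
def H2smooth {X : Type*} [Fintype X] (P : X → ℝ) (ε : ℝ) : ℝ :=
  sSup { r : ℝ | ∃ Q : X → ℝ, (∀ x, 0 ≤ Q x) ∧ (∑ x, |P x - Q x|) ≤ ε ∧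
    r = -Real.logb 2 (∑ x, Q x ^ 2) }

/-- ε-smooth Rényi entropy of order 0 of a density operator (entropy of its eigenvalues). -/
def S0smooth {n : Type*} [Fintype n] [DecidableEq n] (ρ : Matrix n n ℂ) (ε : ℝ) : ℝ :=
  H0smooth (eigs ρ) ε

/-- ε-smooth Rényi entropy of order 2 of a density operator (entropy of its eigenvalues). -/
def S2smooth {n : Type*} [Fintype n] [DecidableEq n] (ρ : Matrix n n ℂ) (ε : ℝ) : ℝ :=
  H2smooth (eigs ρ) ε

/-- Standard basis vector `|y⟩`. -/
def stdb {Y : Type*} [DecidableEq Y] (y : Y) : Y → ℂ := fun y' => if y' = y then 1 else 0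

/-- `n`-fold tensor (Kronecker) product of matrices, one per site. -/
def tpow {n : ℕ} {a b : Type*} (M : Fin n → Matrix a b ℂ) :
    Matrix (Fin n → a) (Fin n → b) ℂ :=
  Matrix.of fun p q => ∏ i, M i (p i) (q i)

/-- `n`-fold tensor product of vectors, one per site. -/
def vpow {n : ℕ} {a : Type*} (v : Fin n → a → ℂ) : (Fin n → a) → ℂ :=
  fun p => ∏ i, v i (p i)

/-- The unitary `U_π` permuting the `n` tensor factors. -/
def permMat {n : ℕ} {a : Type*} [DecidableEq a] (π : Equiv.Perm (Fin n)) :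
    Matrix (Fin n → a) (Fin n → a) ℂ :=
  Matrix.of fun p q => if q = p ∘ π then 1 else 0

/-- Shannon entropy (base 2) of a distribution. -/
def shEnt {X : Type*} [Fintype X] (P : X → ℝ) : ℝ :=
  ∑ x, -(P x * Real.logb 2 (P x))

/-- The binary entropy function. -/
def binEnt (ε : ℝ) : ℝ := -(ε * Real.logb 2 ε) - (1 - ε) * Real.logb 2 (1 - ε)

/-- The quantity `M(X;Y;E)` of a ccq-state: the supremum over all families of density
operators `σ_U^x`, `σ_V^x` of `S(U|VE) - S(U|VY)`. -/
def Mmeas {X Y E : Type*} [Fintype X] [Fintype Y] [Fintype E] [DecidableEq Y] [DecidableEq E]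
    (P : X → Y → ℝ) (σE : X → Y → Matrix E E ℂ) : ℝ :=
  sSup { r : ℝ | ∃ (dU dV : ℕ) (σU : X → Matrix (Fin dU) (Fin dU) ℂ)
      (σV : X → Matrix (Fin dV) (Fin dV) ℂ),
      (∀ x, IsDensity (σU x)) ∧ (∀ x, IsDensity (σV x)) ∧
      r = (vnEntropy (∑ x, ∑ y, P x y • (σU x ⊗ₖ (σV x ⊗ₖ σE x y)))
            - vnEntropy (∑ x, ∑ y, P x y • (σV x ⊗ₖ σE x y)))
        - (vnEntropy (∑ x, ∑ y, P x y • (σU x ⊗ₖ (σV x ⊗ₖ outerPr (stdb y))))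
            - vnEntropy (∑ x, ∑ y, P x y • (σV x ⊗ₖ outerPr (stdb y)))) }

/-!
Write `I(A;B) = H(A) - H(A|B)`, let `d` be the size of the alphabet and `ε ≤ 1/2`. Both the
distance of `A` from uniform and the probability of `A ≠ B` are at most `ε`. Concavity of
`-x log x` gives `H(A) ≥ (1 - d/(d-1) ε) log d ≥ (1 - 2ε) log d`, and Fano's inequality gives
`H(A|B) ≤ ε log (d-1) + h(ε) ≤ ε log d + h(ε)`. Hence `I(A;B) ≥ (1 - 3ε) log d - h(ε)`, and the
missing `2ε log d` is paid for by `h(ε) ≥ 2ε` (concavity of `h`) and `log d ≥ 1`. For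
`1/2 ≤ ε ≤ 1` the inequality `h(ε) ≥ 2(1 - ε)` makes the claimed bound nonpositive.
-/

section Logarithms

open Real

variable {x y d ε : ℝ}

lemma negMulLog_le_neg_mul_log_add_sub (hx : 0 ≤ x) (hy : 0 ≤ y) (hyx : y = 0 → x = 0) :
    negMulLog x ≤ -(x * log y) + (y - x) := by
  rcases hx.eq_or_lt with rfl | hx
  · simpa using hy
  have hy0 : y ≠ 0 := mt hyx hx.ne'
  have hlog : log (y / x) ≤ y / x - 1 := log_le_sub_one_of_pos (by positivity)
  rw [log_div hy0 hx.ne'] at hlog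
  calc negMulLog x = -(x * log y) + x * (log y - log x) := by rw [negMulLog]; ring
    _ ≤ -(x * log y) + x * (y / x - 1) := by gcongr
    _ = -(x * log y) + (y - x) := by field_simp

-- On `[0, 1/d]` this is monotonicity of `log`; on `[1/d, 1]` the left-hand side is the chord of the
-- concave function `negMulLog`.
lemma sub_posPart_mul_log_le_negMulLog (hd : 1 < d) (hx0 : 0 ≤ x) (hx1 : x ≤ 1) :
    (x - d / (d - 1) * (x - d⁻¹)⁺) * log d ≤ negMulLog x := by
  have hd0 : 0 < d := by linarith
  have hd1 : 0 < d - 1 := by linarith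
  rcases le_total x d⁻¹ with hxd | hdx
  · rw [posPart_eq_zero.2 (sub_nonpos.2 hxd), mul_zero, sub_zero]
    rcases hx0.eq_or_lt with rfl | hx
    · simp
    have hlog : log x ≤ -log d := log_inv d ▸ log_le_log hx hxd
    rw [negMulLog, neg_mul_comm]
    exact mul_le_mul_of_nonneg_left (le_neg_of_le_neg hlog) hx0
  · have hchord := concaveOn_negMulLog.2
      (show d⁻¹ ∈ Set.Ici 0 from (inv_pos.2 hd0).le)
      (show (1 : ℝ) ∈ Set.Ici 0 from Set.mem_Ici.2 zero_le_one)
      (show 0 ≤ d * (1 - x) / (d - 1) from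
        div_nonneg (mul_nonneg hd0.le (sub_nonneg.2 hx1)) hd1.le)
      (show 0 ≤ d * (x - d⁻¹) / (d - 1) from
        div_nonneg (mul_nonneg hd0.le (sub_nonneg.2 hdx)) hd1.le)
      (by field_simp; ring)
    have hpoint : (d * (1 - x) / (d - 1)) • d⁻¹ + (d * (x - d⁻¹) / (d - 1)) • (1 : ℝ) = x := by
      simp only [smul_eq_mul]; field_simp; ring
    rw [hpoint, negMulLog_one, negMulLog, log_inv] at hchord
    rw [posPart_eq_self.2 (sub_nonneg.2 hdx)]
    refine le_of_eq_of_le ?_ hchord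
    simp only [smul_eq_mul]; field_simp; ring

lemma binEnt_eq_binEntropy_div_log_two (ε : ℝ) : binEnt ε = binEntropy ε / log 2 := by
  rw [binEntropy_eq_negMulLog_add_negMulLog_one_sub]
  simp only [binEnt, logb, negMulLog]
  ring

lemma binEnt_one_sub (ε : ℝ) : binEnt (1 - ε) = binEnt ε := by
  simp only [binEnt_eq_binEntropy_div_log_two, binEntropy_one_sub]

lemma two_mul_le_binEnt (hε0 : 0 ≤ ε) (hε : ε ≤ 1 / 2) : 2 * ε ≤ binEnt ε := by
  have hchord := strictConcave_binEntropy.concaveOn.2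
    (show (0 : ℝ) ∈ Set.Icc 0 1 by norm_num) (show (2⁻¹ : ℝ) ∈ Set.Icc 0 1 by norm_num)
    (show 0 ≤ 1 - 2 * ε by linarith) (show 0 ≤ 2 * ε by linarith) (by ring)
  have hpoint : (1 - 2 * ε) • (0 : ℝ) + (2 * ε) • (2⁻¹ : ℝ) = ε := by
    simp only [smul_eq_mul]; ring
  rw [hpoint, binEntropy_zero, binEntropy_two_inv, smul_zero, zero_add, smul_eq_mul] at hchord
  rwa [binEnt_eq_binEntropy_div_log_two, le_div_iff₀ (log_pos one_lt_two)]

lemma qaryEntropy_div_log_two_le {q : ℕ} (hq : 2 ≤ q) (hε : 0 ≤ ε) :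
    qaryEntropy q ε / log 2 ≤ ε * logb 2 q + binEnt ε := by
  have hq' : (2 : ℝ) ≤ q := by exact_mod_cast hq
  have : 0 < log 2 := log_pos one_lt_two
  rw [qaryEntropy, binEnt_eq_binEntropy_div_log_two, logb, add_div, mul_div_assoc]
  push_cast
  gcongr <;> linarith

end Logarithms

section Marginals

open Finset

variable {X Y : Type*}

/-- The distribution of the first component under a joint distribution. -/
def fstMarginal [Fintype Y] (P : X × Y → ℝ) (a : X) : ℝ :=
  ∑ b, P (a, b)

/-- The distribution of the second component under a joint distribution. -/
def sndMarginal [Fintype X] (P : X × Y → ℝ) (b : Y) : ℝ :=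
  ∑ a, P (a, b)

lemma eq_zero_of_fstMarginal_eq_zero [Fintype Y] {P : X × Y → ℝ} (hP : ∀ z, 0 ≤ P z)
    {z : X × Y} (hz : fstMarginal P z.1 = 0) : P z = 0 :=
  (sum_eq_zero_iff_of_nonneg fun _ _ => hP _).1 hz z.2 (mem_univ _)

lemma eq_zero_of_sndMarginal_eq_zero [Fintype X] {P : X × Y → ℝ} (hP : ∀ z, 0 ≤ P z)
    {z : X × Y} (hz : sndMarginal P z.2 = 0) : P z = 0 :=
  (sum_eq_zero_iff_of_nonneg fun _ _ => hP _).1 hz z.1 (mem_univ _)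

lemma fstMarginal_mem_stdSimplex [Fintype X] [Fintype Y] {P : X × Y → ℝ}
    (hP : P ∈ stdSimplex ℝ (X × Y)) : fstMarginal P ∈ stdSimplex ℝ X :=
  ⟨fun _ => sum_nonneg fun _ _ => hP.1 _, (Fintype.sum_prod_type P).symm.trans hP.2⟩

end Marginals

section StatisticalDistance

open Finset

variable {X Y : Type*} [Fintype X] [Fintype Y]

/-- The statistical (total variation) distance of two distributions on a finite alphabet. -/
def statDist (p q : X → ℝ) : ℝ :=
  (1 / 2) * ∑ x, |p x - q x|

/-- The distribution of a perfect key pair: uniform and identical on both sides. -/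
def perfectKey (X : Type*) [Fintype X] [DecidableEq X] (z : X × X) : ℝ :=
  if z.1 = z.2 then (Fintype.card X : ℝ)⁻¹ else 0

/-- The probability that guessing the first component from the second by `g` fails. -/
def errorProb [DecidableEq X] (P : X × Y → ℝ) (g : Y → X) : ℝ :=
  ∑ z with z.1 ≠ g z.2, P z

lemma fstMarginal_perfectKey [DecidableEq X] :
    fstMarginal (perfectKey X) = fun _ => (Fintype.card X : ℝ)⁻¹ := by
  ext a
  simp [fstMarginal, perfectKey]

lemma sum_perfectKey [DecidableEq X] [Nonempty X] : ∑ z, perfectKey X z = 1 := by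
  simp [perfectKey, Fintype.sum_prod_type]

lemma errorProb_perfectKey [DecidableEq X] : errorProb (perfectKey X) id = 0 :=
  sum_eq_zero fun _ hz => if_neg (mem_filter.1 hz).2

lemma statDist_nonneg (p q : X → ℝ) : 0 ≤ statDist p q := by
  unfold statDist
  positivity

lemma statDist_eq_sum_posPart {p q : X → ℝ} (h : ∑ x, p x = ∑ x, q x) :
    statDist p q = ∑ x, (p x - q x)⁺ := by
  have habs : ∑ x, |p x - q x| = 2 * ∑ x, (p x - q x)⁺ := by
    calc ∑ x, |p x - q x| = ∑ x, (|p x - q x| + (p x - q x)) := by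
          rw [sum_add_distrib, sum_sub_distrib, h, sub_self, add_zero]
      _ = 2 * ∑ x, (p x - q x)⁺ := by
          simp only [abs_add_eq_two_nsmul_posPart, mul_sum, nsmul_eq_mul, Nat.cast_ofNat]
  rw [statDist, habs]
  ring

lemma sum_sub_sum_le_statDist {p q : X → ℝ} (h : ∑ x, p x = ∑ x, q x) (s : Finset X) :
    ∑ x ∈ s, p x - ∑ x ∈ s, q x ≤ statDist p q := by
  rw [statDist_eq_sum_posPart h, ← sum_sub_distrib]
  calc ∑ x ∈ s, (p x - q x) ≤ ∑ x ∈ s, (p x - q x)⁺ := sum_le_sum fun _ _ => le_posPart _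
    _ ≤ ∑ x, (p x - q x)⁺ :=
      sum_le_sum_of_subset_of_nonneg (subset_univ s) fun _ _ _ => posPart_nonneg _

lemma statDist_fstMarginal_le (P Q : X × Y → ℝ) :
    statDist (fstMarginal P) (fstMarginal Q) ≤ statDist P Q := by
  unfold statDist fstMarginal
  rw [Fintype.sum_prod_type]
  gcongr
  rw [← sum_sub_distrib]
  exact abs_sum_le_sum_abs _ _

lemma errorProb_le_statDist_perfectKey [DecidableEq X] [Nonempty X] {P : X × X → ℝ}
    (hP1 : ∑ z, P z = 1) : errorProb P id ≤ statDist P (perfectKey X) := by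
  have h := sum_sub_sum_le_statDist (hP1.trans sum_perfectKey.symm) {z | z.1 ≠ id z.2}
  change errorProb P id - errorProb (perfectKey X) id ≤ _ at h
  rwa [errorProb_perfectKey, sub_zero] at h

end StatisticalDistance

section Entropy

open Real Finset

variable {X Y : Type*} [Fintype X] [Fintype Y]

/-- The cross entropy `-∑ p log q` (base 2); it is `shEnt p` at `q = p`. -/
def crossEnt (p q : X → ℝ) : ℝ :=
  ∑ x, -(p x * logb 2 (q x))

/-- The conditional entropy `H(A|B)` (base 2) of a joint distribution of `(A, B)`. -/
def condEnt (P : X × Y → ℝ) : ℝ :=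
  shEnt P - shEnt (sndMarginal P)

/-- The mutual information `I(A;B)` (base 2) of a joint distribution of `(A, B)`. -/
def mutualInfo (P : X × Y → ℝ) : ℝ :=
  shEnt (fstMarginal P) + shEnt (sndMarginal P) - shEnt P

lemma mutualInfo_eq_shEnt_sub_condEnt (P : X × Y → ℝ) :
    mutualInfo P = shEnt (fstMarginal P) - condEnt P := by
  unfold mutualInfo condEnt
  ring

lemma shEnt_eq_sum_negMulLog_div_log_two (p : X → ℝ) :
    shEnt p = (∑ x, negMulLog (p x)) / log 2 := by
  simp only [shEnt, logb, negMulLog, sum_div]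
  exact sum_congr rfl fun _ _ => by ring

lemma crossEnt_eq_div_log_two (p q : X → ℝ) :
    crossEnt p q = (∑ x, -(p x * log (q x))) / log 2 := by
  simp only [crossEnt, logb, sum_div]
  exact sum_congr rfl fun _ _ => by ring

lemma crossEnt_mul {p q r : X → ℝ} (hq : ∀ x, q x = 0 → p x = 0) (hr : ∀ x, r x = 0 → p x = 0) :
    crossEnt p (fun x => q x * r x) = crossEnt p q + crossEnt p r := by
  simp only [crossEnt, ← sum_add_distrib]
  refine sum_congr rfl fun x _ => ?_
  by_cases hx : p x = 0
  · simp [hx]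
  · rw [logb_mul (mt (hq x) hx) (mt (hr x) hx)]
    ring

lemma crossEnt_comp_fst (P : X × Y → ℝ) (q : X → ℝ) :
    crossEnt P (fun z => q z.1) = crossEnt (fstMarginal P) q := by
  simp only [crossEnt, fstMarginal, Fintype.sum_prod_type, sum_mul, sum_neg_distrib]

lemma crossEnt_comp_snd (P : X × Y → ℝ) (q : Y → ℝ) :
    crossEnt P (fun z => q z.2) = crossEnt (sndMarginal P) q := by
  simp only [crossEnt, sndMarginal, Fintype.sum_prod_type_right, sum_mul, sum_neg_distrib]

theorem gibbs_inequality {p q : X → ℝ} (hp : ∀ x, 0 ≤ p x) (hq : ∀ x, 0 ≤ q x)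
    (hqp : ∀ x, q x = 0 → p x = 0) (hsum : ∑ x, q x ≤ ∑ x, p x) :
    shEnt p ≤ crossEnt p q := by
  rw [shEnt_eq_sum_negMulLog_div_log_two, crossEnt_eq_div_log_two]
  refine div_le_div_of_nonneg_right ?_ (log_pos one_lt_two).le
  calc ∑ x, negMulLog (p x) ≤ ∑ x, (-(p x * log (q x)) + (q x - p x)) :=
        sum_le_sum fun x _ => negMulLog_le_neg_mul_log_add_sub (hp x) (hq x) (hqp x)
    _ ≤ ∑ x, -(p x * log (q x)) := by
        rw [sum_add_distrib, sum_sub_distrib]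
        linarith

-- Gibbs' inequality against the joint distribution with kernel `W` and the same second marginal.
lemma condEnt_le_crossEnt {P W : X × Y → ℝ} (hP : ∀ z, 0 ≤ P z) (hW : ∀ z, 0 ≤ W z)
    (hWP : ∀ z, W z = 0 → P z = 0) (hW1 : ∀ b, ∑ a, W (a, b) ≤ 1) :
    condEnt P ≤ crossEnt P W := by
  have hm (b : Y) : 0 ≤ sndMarginal P b := sum_nonneg fun _ _ => hP _
  have hmP (z : X × Y) : sndMarginal P z.2 = 0 → P z = 0 := eq_zero_of_sndMarginal_eq_zero hP
  have hsum : ∑ z : X × Y, W z * sndMarginal P z.2 ≤ ∑ z, P z := by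
    simp only [Fintype.sum_prod_type_right, ← sum_mul]
    exact sum_le_sum fun b _ => mul_le_of_le_one_left (hm b) (hW1 b)
  have hgibbs : shEnt P ≤ crossEnt P fun z => W z * sndMarginal P z.2 :=
    gibbs_inequality hP (fun z => mul_nonneg (hW z) (hm z.2))
      (fun z hz => (mul_eq_zero.1 hz).elim (hWP z) (hmP z)) hsum
  rw [crossEnt_mul hWP hmP, crossEnt_comp_snd] at hgibbs
  exact sub_le_iff_le_add.2 hgibbs

lemma mutualInfo_nonneg {P : X × Y → ℝ} (hP : P ∈ stdSimplex ℝ (X × Y)) : 0 ≤ mutualInfo P := by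
  have hA := fstMarginal_mem_stdSimplex hP
  have hcond : condEnt P ≤ crossEnt P fun z => fstMarginal P z.1 :=
    condEnt_le_crossEnt hP.1 (fun z => hA.1 z.1)
      (fun _ => eq_zero_of_fstMarginal_eq_zero hP.1) (fun _ => hA.2.le)
  rw [crossEnt_comp_fst] at hcond
  rw [mutualInfo_eq_shEnt_sub_condEnt]
  exact sub_nonneg.2 hcond

lemma one_sub_statDist_uniform_mul_logb_card_le_shEnt [Nontrivial X] {p : X → ℝ}
    (hp : p ∈ stdSimplex ℝ X) :
    (1 - Fintype.card X / (Fintype.card X - 1) * statDist p fun _ => (Fintype.card X : ℝ)⁻¹)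
      * logb 2 (Fintype.card X) ≤ shEnt p := by
  have hd : (1 : ℝ) < Fintype.card X := by exact_mod_cast Fintype.one_lt_card
  have huniform : ∑ x, p x = ∑ _ : X, (Fintype.card X : ℝ)⁻¹ := by
    rw [hp.2, sum_const, card_univ, nsmul_eq_mul, mul_inv_cancel₀ (by linarith)]
  rw [shEnt_eq_sum_negMulLog_div_log_two, logb, ← mul_div_assoc]
  refine div_le_div_of_nonneg_right ?_ (log_pos one_lt_two).le
  rw [statDist_eq_sum_posPart huniform]
  set d : ℝ := (Fintype.card X : ℝ)
  calc (1 - d / (d - 1) * ∑ x, (p x - d⁻¹)⁺) * log d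
      = ∑ x, (p x - d / (d - 1) * (p x - d⁻¹)⁺) * log d := by
        rw [← sum_mul, sum_sub_distrib, hp.2, mul_sum]
    _ ≤ ∑ x, negMulLog (p x) := sum_le_sum fun x _ =>
        sub_posPart_mul_log_le_negMulLog hd (hp.1 x) (mem_Icc_of_mem_stdSimplex hp x).2

section Fano

variable [DecidableEq X] {P : X × Y → ℝ}

lemma errorProb_nonneg (hP : ∀ z, 0 ≤ P z) (g : Y → X) : 0 ≤ errorProb P g :=
  sum_nonneg fun z _ => hP z

lemma sum_correct_eq_one_sub_errorProb (hP1 : ∑ z, P z = 1) (g : Y → X) :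
    ∑ z with z.1 = g z.2, P z = 1 - errorProb P g :=
  eq_sub_of_add_eq ((sum_filter_add_sum_filter_not univ _ P).trans hP1)

lemma crossEnt_ite (hP1 : ∑ z, P z = 1) (g : Y → X) (α β : ℝ) :
    crossEnt P (fun z => if z.1 = g z.2 then α else β)
      = -((1 - errorProb P g) * logb 2 α + errorProb P g * logb 2 β) := by
  rw [← sum_correct_eq_one_sub_errorProb hP1 g, errorProb, sum_mul, sum_mul, crossEnt,
    sum_neg_distrib, ← sum_filter_add_sum_filter_not univ fun z : X × Y => z.1 = g z.2]
  congr 2 <;> refine sum_congr rfl fun z hz => ?_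
  · rw [if_pos (mem_filter.1 hz).2]
  · rw [if_neg (mem_filter.1 hz).2]

theorem fano_inequality [Nontrivial X] (hP : P ∈ stdSimplex ℝ (X × Y)) (g : Y → X) :
    condEnt P ≤ qaryEntropy (Fintype.card X) (errorProb P g) / log 2 := by
  set δ := errorProb P g
  set d : ℝ := (Fintype.card X : ℝ) with hd_def
  have hd : 0 < d - 1 := sub_pos.2 (Nat.one_lt_cast.2 Fintype.one_lt_card)
  have hδ0 : 0 ≤ δ := errorProb_nonneg hP.1 g
  have hcorrect : ∑ z with z.1 = g z.2, P z = 1 - δ := sum_correct_eq_one_sub_errorProb hP.2 g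
  have hδ1 : 0 ≤ 1 - δ := hcorrect ▸ sum_nonneg fun z _ => hP.1 z
  -- The optimal kernel with error probability `δ`: its errors are equidistributed.
  calc condEnt P ≤ crossEnt P fun z => if z.1 = g z.2 then 1 - δ else δ / (d - 1) := by
        refine condEnt_le_crossEnt hP.1 (fun z => ?_) (fun z hz => ?_) (fun b => ?_)
        · split_ifs
          exacts [hδ1, by positivity]
        · split_ifs at hz with hzg
          · exact (sum_eq_zero_iff_of_nonneg fun z _ => hP.1 z).1 (hcorrect.trans hz) z (by simpa)
          · have hδ_zero : δ = 0 := (div_eq_zero_iff.1 hz).resolve_right hd.ne'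
            exact (sum_eq_zero_iff_of_nonneg fun z _ => hP.1 z).1 hδ_zero z (by simpa)
        · rw [← add_sum_erase univ _ (mem_univ (g b)), if_pos rfl,
            sum_congr rfl fun a ha => if_neg (ne_of_mem_erase ha), sum_const,
            card_erase_of_mem (mem_univ _), card_univ, nsmul_eq_mul,
            Nat.cast_pred Fintype.card_pos, ← hd_def, mul_div_cancel₀ _ hd.ne']
          linarith
    _ = -((1 - δ) * logb 2 (1 - δ) + δ * logb 2 (δ / (d - 1))) := crossEnt_ite hP.2 g _ _
    _ = qaryEntropy (Fintype.card X) δ / log 2 := by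
        rcases eq_or_ne δ 0 with hδ | hδ
        · simp [hδ]
        · rw [logb_div hδ hd.ne', qaryEntropy, binEntropy_eq_negMulLog_add_negMulLog_one_sub]
          simp only [logb, negMulLog, Int.cast_sub, Int.cast_natCast, Int.cast_one, ← hd_def]
          ring

end Fano

end Entropy

section AlmostPerfectKey

open Real

variable {X : Type*} [Fintype X] [DecidableEq X] {P : X × X → ℝ} {ε : ℝ}

lemma le_mutualInfo_of_statDist_perfectKey_le [Nontrivial X] (hP : P ∈ stdSimplex ℝ (X × X))
    (hclose : statDist P (perfectKey X) ≤ ε) (hε : ε ≤ 1 - 1 / Fintype.card X) :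
    (1 - Fintype.card X / (Fintype.card X - 1) * ε) * logb 2 (Fintype.card X)
      - qaryEntropy (Fintype.card X) ε / log 2 ≤ mutualInfo P := by
  have hd : (1 : ℝ) < Fintype.card X := by exact_mod_cast Fintype.one_lt_card
  have : 0 < (Fintype.card X : ℝ) - 1 := by linarith
  have hlogd : 0 ≤ logb 2 (Fintype.card X) := logb_nonneg one_lt_two hd.le
  have : 0 < log 2 := log_pos one_lt_two
  have hA : (1 - Fintype.card X / (Fintype.card X - 1) * ε) * logb 2 (Fintype.card X)
      ≤ shEnt (fstMarginal P) := by
    refine le_trans ?_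
      (one_sub_statDist_uniform_mul_logb_card_le_shEnt (fstMarginal_mem_stdSimplex hP))
    rw [← fstMarginal_perfectKey]
    gcongr
    exact (statDist_fstMarginal_le P (perfectKey X)).trans hclose
  have herr : errorProb P id ≤ ε := (errorProb_le_statDist_perfectKey hP.2).trans hclose
  have herr0 : 0 ≤ errorProb P id := errorProb_nonneg hP.1 id
  have hAB : condEnt P ≤ qaryEntropy (Fintype.card X) ε / log 2 := by
    refine (fano_inequality hP id).trans ?_
    gcongr
    exact (qaryEntropy_strictMonoOn Fintype.one_lt_card).monotoneOn
      ⟨herr0, herr.trans hε⟩ ⟨herr0.trans herr, hε⟩ herr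
  rw [mutualInfo_eq_shEnt_sub_condEnt]
  exact sub_le_sub hA hAB

theorem mutual_information_of_almost_perfect_key_general (hP : P ∈ stdSimplex ℝ (X × X))
    (hε : ε ≤ 1) (hclose : statDist P (perfectKey X) ≤ ε) :
    (1 - ε - 2 * binEnt ε) * logb 2 (Fintype.card X) ≤ mutualInfo P := by
  have hε0 : 0 ≤ ε := (statDist_nonneg _ _).trans hclose
  rcases subsingleton_or_nontrivial X with hX | hX
  · have hcard : logb 2 (Fintype.card X) = 0 := by
      have := Fintype.card_le_one_iff_subsingleton.2 hX
      interval_cases Fintype.card X <;> simp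
    simpa [hcard] using mutualInfo_nonneg hP
  have hd : (2 : ℝ) ≤ Fintype.card X := by exact_mod_cast Fintype.one_lt_card (α := X)
  have hlogd : 1 ≤ logb 2 (Fintype.card X) := by
    rwa [le_logb_iff_rpow_le one_lt_two (by linarith), rpow_one]
  rcases le_total ε (1 / 2) with hhalf | hhalf
  · have hcard : 1 / (Fintype.card X : ℝ) ≤ 1 / 2 := one_div_le_one_div_of_le two_pos hd
    have hsharp := le_mutualInfo_of_statDist_perfectKey_le hP hclose (by linarith)
    have hfano := qaryEntropy_div_log_two_le (Fintype.one_lt_card (α := X)) hε0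
    have hchord := two_mul_le_binEnt hε0 hhalf
    have hratio : (Fintype.card X : ℝ) / (Fintype.card X - 1) ≤ 2 := by
      rw [div_le_iff₀] <;> linarith
    have hentropy : binEnt ε ≤ binEnt ε * logb 2 (Fintype.card X) :=
      le_mul_of_one_le_right (by linarith) hlogd
    have hmissing : 2 * ε * logb 2 (Fintype.card X) ≤ binEnt ε * logb 2 (Fintype.card X) := by
      gcongr
    calc (1 - ε - 2 * binEnt ε) * logb 2 (Fintype.card X)
        ≤ (1 - 2 * ε) * logb 2 (Fintype.card X) - (ε * logb 2 (Fintype.card X) + binEnt ε) := by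
          linarith
      _ ≤ (1 - Fintype.card X / (Fintype.card X - 1) * ε) * logb 2 (Fintype.card X)
          - qaryEntropy (Fintype.card X) ε / log 2 := by gcongr
      _ ≤ mutualInfo P := hsharp
  · have hchord : 2 * (1 - ε) ≤ binEnt ε :=
      binEnt_one_sub ε ▸ two_mul_le_binEnt (sub_nonneg.2 hε) (by linarith)
    exact (mul_nonpos_of_nonpos_of_nonneg (by linarith) (by linarith)).trans (mutualInfo_nonneg hP)

end AlmostPerfectKey

/-- if the joint distribution of a key pair `(S_A, S_B)` on `{0,1}^ℓ` is
within statistical distance `ε ≤ 1/2` of a perfect key pair, then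
`I(S_A;S_B) ≥ (1 - ε - 2h(ε))·ℓ`. -/
theorem mutual_information_of_almost_perfect_key
    {l : ℕ} (hl : 1 ≤ l) (ε : ℝ) (hε0 : 0 ≤ ε) (hε : ε ≤ 1 / 2)
    (P : (Fin l → Bool) → (Fin l → Bool) → ℝ)
    (hP0 : ∀ a b, 0 ≤ P a b) (hP1 : ∑ a, ∑ b, P a b = 1)
    (hclose : (1 / 2) * ∑ a, ∑ b, |P a b - (if a = b then ((2 : ℝ) ^ l)⁻¹ else 0)| ≤ ε) :
    shEnt (fun a => ∑ b, P a b) + shEnt (fun b => ∑ a, P a b)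
        - shEnt (fun p : (Fin l → Bool) × (Fin l → Bool) => P p.1 p.2)
      ≥ (1 - ε - 2 * binEnt ε) * l := by
  have hlog : Real.logb 2 (Fintype.card (Fin l → Bool)) = l := by simp [Real.logb_pow]
  exact hlog ▸ mutual_information_of_almost_perfect_key_general (P := fun z => P z.1 z.2) (ε := ε)
    ⟨fun z => hP0 z.1 z.2, by rwa [Fintype.sum_prod_type]⟩ (by linarith)
    (by simpa [statDist, perfectKey, Fintype.sum_prod_type] using hclose)
end
end

section
/- Let ℓ ≥ 1, let 0 ≤ ε ≤ 1/2, and let ρ_{S_A S_B E} = Σ_{s_A, s_B ∈ {0,1}^ℓ} P(s_A, s_B) |s_A⟩⟨s_A| ⊗ |s_B⟩⟨s_B| ⊗ ρ_E^{s_A, s_B} be a ccq-state describing a key pair (S_A, S_B) together with an adversary's quantum system E. Suppose the key is ε-secure, i.e., δ(ρ_{S_A S_B E}, Σ_{s∈{0,1}^ℓ} 2^{−ℓ} |s⟩⟨s| ⊗ |s⟩⟨s| ⊗ ρ_E) ≤ ε, where ρ_E is the reduced state of ρ_{S_A S_B E} on E. Then M(S_A; S_B; E) ≥ (1 − ε −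 2h(ε) − √(2ε))·ℓ − 1/e, where h is the binary entropy function. -/
open scoped Matrix Kronecker BigOperators ComplexOrder
open Matrix

noncomputable section

/-!
Taking `U` to be a copy of `X` and `V` trivial gives `M(X;Y;E) ≥ S(X|E) - S(X|Y)`. Since the secure
state and the ideal one are at trace distance `t ≤ ε`, there are positive operators `A` and `B` of
trace `t` with `ρ + B = ω + A` (Jordan decomposition of `ρ - ω`), and these can be read off block by
block. As `ρ` and `ω` have the same `E`-marginal, subadditivity and concavity of the entropy turn
this identity into `S(X|E) ≥ (1 - t) log |X| - (1 + t) h(t / (1 + t))`. The keys differ with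
probability at most `t`, so Fano's inequality gives `S(X|Y) ≤ t log |X| + h(t)`.
-/

theorem nonempty_of_sum_eq_one {ι : Type*} [Fintype ι] {p : ι → ℝ} (hp : ∑ i, p i = 1) :
    Nonempty ι :=
  Finset.univ_nonempty_iff.1 <| Finset.nonempty_of_sum_ne_zero (hp.trans_ne one_ne_zero)

section Shannon

variable {X Y : Type*} [Fintype X] [Fintype Y]

theorem shEnt_eq_sum_negMulLog_div (P : X → ℝ) :
    shEnt P = (∑ x, Real.negMulLog (P x)) / Real.log 2 := by
  simp only [shEnt, Real.negMulLog, Real.logb, Finset.sum_div]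
  exact Finset.sum_congr rfl fun x _ => by ring

theorem concaveOn_shEnt : ConcaveOn ℝ (Set.Ici 0) (shEnt : (X → ℝ) → ℝ) := by
  refine ⟨convex_Ici 0, fun P hP Q hQ a b ha hb hab => ?_⟩
  simp only [shEnt_eq_sum_negMulLog_div, smul_eq_mul, mul_div_assoc', ← add_div]
  gcongr
  simp only [Finset.mul_sum, ← Finset.sum_add_distrib]
  exact Finset.sum_le_sum fun x _ => Real.concaveOn_negMulLog.2 (hP x) (hQ x) ha hb hab

theorem shEnt_le_shEnt_mulVec [DecidableEq X] {M : Matrix X X ℝ}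
    (hM : M ∈ doublyStochastic ℝ X) {P : X → ℝ} (hP : 0 ≤ P) : shEnt P ≤ shEnt (M *ᵥ P) := by
  simp only [shEnt_eq_sum_negMulLog_div]
  gcongr ?_ / _
  calc ∑ y, Real.negMulLog (P y)
      = ∑ y, ∑ x, M x y * Real.negMulLog (P y) :=
        Finset.sum_congr rfl fun y _ => by
          rw [← Finset.sum_mul, sum_col_of_mem_doublyStochastic hM, one_mul]
    _ = ∑ x, ∑ y, M x y * Real.negMulLog (P y) := Finset.sum_comm
    _ ≤ ∑ x, Real.negMulLog ((M *ᵥ P) x) := Finset.sum_le_sum fun x _ =>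
        Real.concaveOn_negMulLog.le_map_sum (fun y _ => nonneg_of_mem_doublyStochastic hM)
          (sum_row_of_mem_doublyStochastic hM x) fun y _ => hP y

theorem shEnt_smul (c : ℝ) (P : X → ℝ) :
    shEnt (c • P) = c * (shEnt P - Real.logb 2 c * ∑ x, P x) := by
  simp only [shEnt_eq_sum_negMulLog_div, Pi.smul_apply, smul_eq_mul, Real.negMulLog_mul,
    Finset.sum_add_distrib, ← Finset.mul_sum, ← Finset.sum_mul]
  simp only [Real.negMulLog, Real.logb]
  ring

theorem shEnt_prod (P : X → ℝ) (Q : Y → ℝ) :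
    shEnt (fun q : X × Y => P q.1 * Q q.2) =
      (∑ y, Q y) * shEnt P + (∑ x, P x) * shEnt Q := by
  simp only [shEnt_eq_sum_negMulLog_div, Real.negMulLog_mul, Fintype.sum_prod_type,
    Finset.sum_add_distrib, ← Finset.mul_sum, ← Finset.sum_mul]
  ring

theorem shEnt_single [DecidableEq X] (x : X) (p : ℝ) :
    shEnt (Pi.single x p) = -(p * Real.logb 2 p) := by
  rw [shEnt, Finset.sum_eq_single x (fun y _ hy => by simp [hy]) (by simp), Pi.single_eq_same]

theorem binEnt_eq_binEntropy_div (ε : ℝ) : binEnt ε = Real.binEntropy ε / Real.log 2 := by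
  simp only [binEnt, Real.binEntropy_eq_negMulLog_add_negMulLog_one_sub, Real.negMulLog,
    Real.logb]
  ring

theorem binEnt_nonneg {ε : ℝ} (h0 : 0 ≤ ε) (h1 : ε ≤ 1) : 0 ≤ binEnt ε := by
  rw [binEnt_eq_binEntropy_div]
  exact div_nonneg (Real.binEntropy_nonneg h0 h1) (Real.log_nonneg one_le_two)

theorem binEnt_le_one (ε : ℝ) : binEnt ε ≤ 1 := by
  rw [binEnt_eq_binEntropy_div]
  exact div_le_one_of_le₀ Real.binEntropy_le_log_two (Real.log_nonneg one_le_two)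

theorem monotoneOn_binEnt : MonotoneOn binEnt (Set.Icc 0 (1 / 2)) := by
  intro s hs t ht hst
  rw [binEnt_eq_binEntropy_div, binEnt_eq_binEntropy_div]
  gcongr
  rw [one_div] at hs ht
  exact Real.binEntropy_strictMonoOn.monotoneOn hs ht hst

theorem add_mul_binEnt_div_add {a b : ℝ} (ha : 0 < a) (hb : 0 < b) :
    (a + b) * binEnt (b / (a + b)) =
      (a + b) * Real.logb 2 (a + b) - a * Real.logb 2 a - b * Real.logb 2 b := by
  have hab : 0 < a + b := add_pos ha hb
  have hcompl : 1 - b / (a + b) = a / (a + b) := by field_simp; ring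
  rw [binEnt, hcompl, Real.logb_div hb.ne' hab.ne', Real.logb_div ha.ne' hab.ne']
  field_simp
  ring

theorem one_add_mul_binEnt_div_le {t ε : ℝ} (ht : 0 ≤ t) (htε : t ≤ ε) (hε : ε ≤ 1 / 2) :
    (1 + t) * binEnt (t / (1 + t)) ≤ (1 + ε) * binEnt ε := by
  have hdiv : t / (1 + t) ≤ ε := (div_le_self ht (by linarith)).trans htε
  have hdiv0 : 0 ≤ t / (1 + t) := by positivity
  exact mul_le_mul (by linarith)
    (monotoneOn_binEnt ⟨hdiv0, hdiv.trans hε⟩ ⟨ht.trans htε, hε⟩ hdiv)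
    (binEnt_nonneg hdiv0 (by linarith)) (by linarith)

end Shannon

section ComplexMatrices

variable {m n ι : Type*}

theorem isHermitian_diagonal_ofReal [DecidableEq n] (d : n → ℝ) :
    (diagonal fun i => (d i : ℂ)).IsHermitian :=
  isHermitian_diagonal_of_self_adjoint _ (by ext i; simp)

theorem posSemidef_diagonal_ofReal [DecidableEq n] {d : n → ℝ} (hd : 0 ≤ d) :
    (diagonal fun i => (d i : ℂ)).PosSemidef :=
  PosSemidef.diagonal fun i => Complex.zero_le_real.2 (hd i)

theorem sum_diagonal_ofReal [DecidableEq n] [Fintype ι] (d : ι → n → ℝ) :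
    ∑ i, diagonal (fun j => (d i j : ℂ)) = diagonal fun j => ((∑ i, d i) j : ℂ) := by
  ext j k
  rcases eq_or_ne j k with rfl | hjk
  · simp [Matrix.sum_apply]
  · simp [Matrix.sum_apply, hjk]

theorem posSemidef_outerPr [Finite n] (v : n → ℂ) : (outerPr v).PosSemidef := by
  have := Fintype.ofFinite n
  exact posSemidef_vecMulVec_self_star v

theorem sum_smul_kronecker {k l : Type*} [Fintype ι] (A : Matrix k l ℂ) (p : ι → ℝ)
    (B : ι → Matrix m n ℂ) : ∑ i, p i • (A ⊗ₖ B i) = A ⊗ₖ ∑ i, p i • B i := by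
  ext i j
  simp only [Matrix.sum_apply, kroneckerMap_apply, Matrix.smul_apply, Finset.mul_sum,
    mul_smul_comm]

theorem re_trace_nonneg [Fintype n] {A : Matrix n n ℂ} (hA : A.PosSemidef) : 0 ≤ A.trace.re :=
  (Complex.nonneg_iff.1 hA.trace_nonneg).1

theorem eq_zero_of_re_trace_eq_zero [Fintype n] {A : Matrix n n ℂ} (hA : A.PosSemidef)
    (htr : A.trace.re = 0) : A = 0 :=
  hA.trace_eq_zero_iff.1 (Complex.ext htr (Complex.nonneg_iff.1 hA.trace_nonneg).2.symm)

/-- The block row `[C₁ | C₂ | ⋯]` of a family of matrices, used to compare `∑ i, C i * (C i)ᴴ`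
with the Gram matrix of the family. -/
def blockRow (C : ι → Matrix m n ℂ) : Matrix m (ι × n) ℂ :=
  of fun a q => C q.1 a q.2

theorem blockRow_mul_conjTranspose [Fintype n] [Fintype ι] (C : ι → Matrix m n ℂ) :
    blockRow C * (blockRow C)ᴴ = ∑ i, C i * (C i)ᴴ := by
  ext a b
  simp only [blockRow, Matrix.sum_apply, Matrix.mul_apply, Fintype.sum_prod_type, of_apply,
    conjTranspose_apply]

theorem conjTranspose_mul_blockRow_apply [Fintype m] (C : ι → Matrix m n ℂ) (p q : ι × n) :
    ((blockRow C)ᴴ * blockRow C) p q = ((C p.1)ᴴ * C q.1) p.2 q.2 :=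
  rfl

end ComplexMatrices

section VonNeumann

variable {m n ι : Type*} [Fintype m] [DecidableEq m] [Fintype n] [DecidableEq n] [Fintype ι]

theorem exists_unitary_diagonalization {A : Matrix n n ℂ} (hA : A.IsHermitian) :
    ∃ U ∈ unitaryGroup n ℂ, A = U * diagonal (fun i => (eigs A i : ℂ)) * Uᴴ := by
  refine ⟨hA.eigenvectorUnitary, hA.eigenvectorUnitary.2, ?_⟩
  have hspec := hA.spectral_theorem
  rw [Unitary.conjStarAlgAut_apply] at hspec
  rw [eigs, dif_pos hA]
  exact hspec

theorem eigs_nonneg {A : Matrix n n ℂ} (hA : A.PosSemidef) : 0 ≤ eigs A := by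
  rw [eigs, dif_pos hA.isHermitian]
  exact hA.eigenvalues_nonneg

theorem sum_eigs {A : Matrix n n ℂ} (hA : A.IsHermitian) : ∑ i, eigs A i = A.trace.re := by
  simp [hA.trace_eq_sum_eigenvalues, eigs, hA]

theorem vnEntropy_eq_sum_roots {A : Matrix n n ℂ} (hA : A.IsHermitian) :
    vnEntropy A = (A.charpoly.roots.map fun z : ℂ => -(z.re * Real.logb 2 z.re)).sum := by
  rw [hA.roots_charpoly_eq_eigenvalues]
  simp [vnEntropy, eigs, hA]

theorem vnEntropy_mul_comm {A : Matrix m n ℂ} {B : Matrix n m ℂ} (hAB : (A * B).IsHermitian)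
    (hBA : (B * A).IsHermitian) : vnEntropy (A * B) = vnEntropy (B * A) := by
  -- The two products have the same eigenvalues up to zeros, which carry no entropy.
  have hroots : ∀ (k : ℕ) {p : Polynomial ℂ}, p.Monic →
      ((Polynomial.X ^ k * p).roots.map fun z : ℂ => -(z.re * Real.logb 2 z.re)).sum =
        (p.roots.map fun z : ℂ => -(z.re * Real.logb 2 z.re)).sum := fun k p hp => by
    rw [Polynomial.roots_mul ((Polynomial.monic_X_pow k).mul hp).ne_zero]
    simp [Multiset.map_nsmul, Multiset.sum_nsmul]
  rw [vnEntropy_eq_sum_roots hAB, vnEntropy_eq_sum_roots hBA,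
    ← hroots (Fintype.card n) (charpoly_monic _), charpoly_mul_comm',
    hroots (Fintype.card m) (charpoly_monic _)]

theorem vnEntropy_mul_mul_conjTranspose {V : Matrix m n ℂ} (hV : Vᴴ * V = 1) {A : Matrix n n ℂ}
    (hA : A.IsHermitian) : vnEntropy (V * A * Vᴴ) = vnEntropy A := by
  have hconj : A * Vᴴ * V = A := by rw [Matrix.mul_assoc, hV, Matrix.mul_one]
  have hHerm := isHermitian_mul_mul_conjTranspose V hA
  rw [Matrix.mul_assoc] at hHerm ⊢
  rw [vnEntropy_mul_comm hHerm (hconj.symm ▸ hA), hconj]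

theorem vnEntropy_diagonal (d : n → ℝ) : vnEntropy (diagonal fun i => (d i : ℂ)) = shEnt d := by
  rw [vnEntropy_eq_sum_roots (isHermitian_diagonal_ofReal d), charpoly_diagonal,
    Polynomial.roots_prod _ _ (Finset.prod_ne_zero_iff.2 fun i _ => Polynomial.X_sub_C_ne_zero _)]
  simp [shEnt]

theorem vnEntropy_unitary_conj_diagonal {U : Matrix n n ℂ} (hU : U ∈ unitaryGroup n ℂ)
    (d : n → ℝ) : vnEntropy (U * diagonal (fun i => (d i : ℂ)) * Uᴴ) = shEnt d := by
  rw [vnEntropy_mul_mul_conjTranspose (mem_unitaryGroup_iff'.1 hU) (isHermitian_diagonal_ofReal d),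
    vnEntropy_diagonal]

theorem vnEntropy_smul {A : Matrix n n ℂ} (hA : A.IsHermitian) (c : ℝ) :
    vnEntropy (c • A) = c * (vnEntropy A - Real.logb 2 c * A.trace.re) := by
  obtain ⟨U, hU, hAU⟩ := exists_unitary_diagonalization hA
  have hcA : c • A = U * diagonal (fun i => ((c • eigs A) i : ℂ)) * Uᴴ := by
    conv_lhs => rw [hAU]
    rw [← Matrix.smul_mul, ← Matrix.mul_smul, ← diagonal_smul]
    congr 3
    ext i
    simp
  rw [hcA, vnEntropy_unitary_conj_diagonal hU, shEnt_smul, sum_eigs hA]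
  rfl

theorem vnEntropy_kronecker {A : Matrix m m ℂ} {B : Matrix n n ℂ} (hA : A.IsHermitian)
    (hB : B.IsHermitian) :
    vnEntropy (A ⊗ₖ B) = B.trace.re * vnEntropy A + A.trace.re * vnEntropy B := by
  obtain ⟨U, hU, hAU⟩ := exists_unitary_diagonalization hA
  obtain ⟨W, hW, hBW⟩ := exists_unitary_diagonalization hB
  have hAB : A ⊗ₖ B = (U ⊗ₖ W) *
      diagonal (fun q : m × n => ((eigs A q.1 * eigs B q.2 : ℝ) : ℂ)) * (U ⊗ₖ W)ᴴ := by
    conv_lhs => rw [hAU, hBW]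
    simp only [mul_kronecker_mul, conjTranspose_kronecker, diagonal_kronecker_diagonal,
      Complex.ofReal_mul]
  rw [hAB, vnEntropy_unitary_conj_diagonal (kronecker_mem_unitary hU hW), shEnt_prod, sum_eigs hA,
    sum_eigs hB]
  rfl

theorem vnEntropy_zero : vnEntropy (0 : Matrix n n ℂ) = 0 := by
  simpa using vnEntropy_smul (isHermitian_zero (n := n) (α := ℂ)) 0

theorem exists_mul_conjTranspose_of_posSemidef {A : Matrix n n ℂ} (hA : A.PosSemidef) :
    ∃ C : Matrix n n ℂ, C * Cᴴ = A ∧ Cᴴ * C = diagonal fun i => (eigs A i : ℂ) := by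
  obtain ⟨U, hU, hAU⟩ := exists_unitary_diagonalization hA.isHermitian
  have hsqrt : diagonal (fun i => (√(eigs A i) : ℂ)) * diagonal (fun i => (√(eigs A i) : ℂ)) =
      diagonal fun i => (eigs A i : ℂ) := by
    simp only [diagonal_mul_diagonal, ← Complex.ofReal_mul, Real.mul_self_sqrt (eigs_nonneg hA _)]
  have hsqrtH : (diagonal fun i => (√(eigs A i) : ℂ))ᴴ = diagonal fun i => (√(eigs A i) : ℂ) := by
    rw [diagonal_conjTranspose]
    congr 1
    ext i
    simp
  refine ⟨U * diagonal fun i => (√(eigs A i) : ℂ), ?_, ?_⟩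
  · rw [conjTranspose_mul, hsqrtH, Matrix.mul_assoc, ← Matrix.mul_assoc _ _ Uᴴ, hsqrt,
      ← Matrix.mul_assoc, ← hAU]
  · rw [conjTranspose_mul, hsqrtH, Matrix.mul_assoc, ← Matrix.mul_assoc Uᴴ,
      ← star_eq_conjTranspose, mem_unitaryGroup_iff'.1 hU, Matrix.one_mul, hsqrt]

theorem normSq_mem_doublyStochastic {U : Matrix n n ℂ} (hU : U ∈ unitaryGroup n ℂ) :
    (U.map Complex.normSq) ∈ doublyStochastic ℝ n := by
  refine mem_doublyStochastic_iff_sum.2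
    ⟨fun i j => Complex.normSq_nonneg _, fun i => ?_, fun j => ?_⟩
  · have hrow := congrArg Complex.re (congrFun (congrFun (mem_unitaryGroup_iff.1 hU) i) i)
    simpa [Matrix.mul_apply, Complex.normSq_apply] using hrow
  · have hcol := congrArg Complex.re (congrFun (congrFun (mem_unitaryGroup_iff'.1 hU) j) j)
    simpa [Matrix.mul_apply, Complex.normSq_apply] using hcol

-- The diagonal of `A` is a doubly stochastic average of its eigenvalues.
theorem vnEntropy_le_shEnt_diag {A : Matrix n n ℂ} (hA : A.PosSemidef) :
    vnEntropy A ≤ shEnt fun i => (A i i).re := by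
  obtain ⟨U, hU, hAU⟩ := exists_unitary_diagonalization hA.isHermitian
  have hdiag : (fun i => (A i i).re) = U.map Complex.normSq *ᵥ eigs A := by
    ext i
    conv_lhs => rw [hAU, Matrix.mul_apply, Complex.re_sum]
    refine Finset.sum_congr rfl fun j _ => ?_
    rw [mul_diagonal, conjTranspose_apply, RCLike.star_def, mul_right_comm, Complex.mul_conj,
      ← Complex.ofReal_mul, Complex.ofReal_re]
    rfl
  rw [hdiag]
  exact shEnt_le_shEnt_mulVec (normSq_mem_doublyStochastic hU) (eigs_nonneg hA)

theorem vnEntropy_le_shEnt_diag_unitary_conj {A U : Matrix n n ℂ} (hA : A.PosSemidef)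
    (hU : U ∈ unitaryGroup n ℂ) : vnEntropy A ≤ shEnt fun i => ((Uᴴ * A * U) i i).re := by
  have hUU : (Uᴴ)ᴴ * Uᴴ = 1 := by
    rw [conjTranspose_conjTranspose]
    exact mem_unitaryGroup_iff.1 hU
  have hentropy := vnEntropy_mul_mul_conjTranspose hUU hA.isHermitian
  rw [conjTranspose_conjTranspose] at hentropy
  rw [← hentropy]
  exact vnEntropy_le_shEnt_diag (hA.conjTranspose_mul_mul_same U)

theorem exists_unitary_eigs_eq_diag {A : Matrix n n ℂ} (hA : A.IsHermitian) :
    ∃ U ∈ unitaryGroup n ℂ, eigs A = fun i => ((Uᴴ * A * U) i i).re := by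
  obtain ⟨U, hU, hAU⟩ := exists_unitary_diagonalization hA
  have hUU : Uᴴ * U = 1 := mem_unitaryGroup_iff'.1 hU
  have hdiag : Uᴴ * A * U = diagonal fun i => (eigs A i : ℂ) := by
    conv_lhs => rw [hAU]
    simp only [Matrix.mul_assoc, hUU, Matrix.mul_one]
    rw [← Matrix.mul_assoc, hUU, Matrix.one_mul]
  exact ⟨U, hU, by simp [hdiag]⟩

theorem sum_mul_vnEntropy_le {A : ι → Matrix n n ℂ} (hA : ∀ i, (A i).PosSemidef)
    {p : ι → ℝ} (hp : ∀ i, 0 ≤ p i) (hp1 : ∑ i, p i = 1) :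
    ∑ i, p i * vnEntropy (A i) ≤ vnEntropy (∑ i, p i • A i) := by
  obtain ⟨U, hU, hdiag⟩ := exists_unitary_eigs_eq_diag
    (posSemidef_sum Finset.univ fun i _ => (hA i).smul (hp i)).isHermitian
  calc ∑ i, p i * vnEntropy (A i)
      ≤ ∑ i, p i • shEnt fun t => ((Uᴴ * A i * U) t t).re :=
        Finset.sum_le_sum fun i _ => mul_le_mul_of_nonneg_left
          (vnEntropy_le_shEnt_diag_unitary_conj (hA i) hU) (hp i)
    _ ≤ shEnt (∑ i, p i • fun t => ((Uᴴ * A i * U) t t).re) :=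
        concaveOn_shEnt.le_map_sum (fun i _ => hp i) hp1 fun i _ t =>
          (Complex.nonneg_iff.1 ((hA i).conjTranspose_mul_mul_same U).diag_nonneg).1
    _ = vnEntropy (∑ i, p i • A i) := by
        change _ = shEnt (eigs (∑ i, p i • A i))
        rw [hdiag]
        congr 1
        ext t
        simp [Matrix.mul_sum, Matrix.sum_mul, Matrix.sum_apply]

theorem sum_vnEntropy_eq_shEnt (A : ι → Matrix n n ℂ) :
    ∑ i, vnEntropy (A i) = shEnt fun q : ι × n => eigs (A q.1) q.2 := by
  rw [shEnt, Fintype.sum_prod_type]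
  rfl

theorem vnEntropy_sum_le {A : ι → Matrix n n ℂ} (hA : ∀ i, (A i).PosSemidef) :
    vnEntropy (∑ i, A i) ≤ ∑ i, vnEntropy (A i) := by
  classical
  choose C hCA hCeigs using fun i => exists_mul_conjTranspose_of_posSemidef (hA i)
  calc vnEntropy (∑ i, A i)
      = vnEntropy ((blockRow C)ᴴ * blockRow C) := by
        rw [← vnEntropy_mul_comm (isHermitian_mul_conjTranspose_self _)
          (isHermitian_conjTranspose_mul_self _), blockRow_mul_conjTranspose]
        simp only [hCA]
    _ ≤ shEnt fun q => (((blockRow C)ᴴ * blockRow C) q q).re :=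
        vnEntropy_le_shEnt_diag (posSemidef_conjTranspose_mul_self _)
    _ = ∑ i, vnEntropy (A i) := by
        simp only [conjTranspose_mul_blockRow_apply, hCeigs, diagonal_apply_eq, Complex.ofReal_re,
          sum_vnEntropy_eq_shEnt]

theorem vnEntropy_sum_of_mul_eq_zero {A : ι → Matrix n n ℂ} (hA : ∀ i, (A i).PosSemidef)
    (horth : Pairwise fun i j => A i * A j = 0) :
    vnEntropy (∑ i, A i) = ∑ i, vnEntropy (A i) := by
  classical
  choose C hCA hCeigs using fun i => exists_mul_conjTranspose_of_posSemidef (hA i)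
  have hCorth : ∀ i j, i ≠ j → (C i)ᴴ * C j = 0 := fun i j hij => by
    have hAij : A i * A j = 0 := horth hij
    rwa [← hCA, ← hCA, self_mul_conjTranspose_mul_eq_zero, mul_self_mul_conjTranspose_eq_zero]
      at hAij
  have hgram : (blockRow C)ᴴ * blockRow C =
      diagonal fun q : ι × n => ((eigs (A q.1) q.2 : ℝ) : ℂ) := by
    ext ⟨i, s⟩ ⟨j, t⟩
    rw [conjTranspose_mul_blockRow_apply]
    rcases eq_or_ne i j with rfl | hij
    · simp [hCeigs, diagonal_apply]
    · simp [hCorth i j hij, hij]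
  rw [sum_vnEntropy_eq_shEnt, ← vnEntropy_diagonal, ← hgram,
    ← vnEntropy_mul_comm (isHermitian_mul_conjTranspose_self _)
      (isHermitian_conjTranspose_mul_self _), blockRow_mul_conjTranspose]
  simp only [hCA]

theorem vnEntropy_add_le {A B : Matrix n n ℂ} (hA : A.PosSemidef) (hB : B.PosSemidef) :
    vnEntropy (A + B) ≤ vnEntropy A + vnEntropy B := by
  simpa using vnEntropy_sum_le (A := fun i => cond i A B) (by rintro (_ | _) <;> assumption)

theorem sum_mul_vnEntropy_le_add_logb {A : ι → Matrix n n ℂ} (hA : ∀ i, (A i).PosSemidef)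
    {w : ι → ℝ} (hw : ∀ i, 0 ≤ w i) (hpos : 0 < ∑ i, w i) :
    ∑ i, w i * vnEntropy (A i) ≤ vnEntropy (∑ i, w i • A i) +
      Real.logb 2 (∑ i, w i) * (∑ i, w i • A i).trace.re := by
  set W := ∑ i, w i with hW
  have hmix := sum_mul_vnEntropy_le hA (p := fun i => W⁻¹ * w i)
    (fun i => mul_nonneg (inv_nonneg.2 hpos.le) (hw i))
    (by rw [← Finset.mul_sum, ← hW, inv_mul_cancel₀ hpos.ne'])
  simp only [mul_assoc, mul_smul, ← Finset.mul_sum, ← Finset.smul_sum] at hmix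
  rw [vnEntropy_smul (posSemidef_sum _ fun i _ => (hA i).smul (hw i)).isHermitian, Real.logb_inv,
    neg_mul, sub_neg_eq_add] at hmix
  exact le_of_mul_le_mul_left hmix (inv_pos.2 hpos)

theorem vnEntropy_add_vnEntropy_le {A B : Matrix n n ℂ} (hA : A.PosSemidef) (hB : B.PosSemidef) :
    vnEntropy A + vnEntropy B ≤ vnEntropy (A + B) +
      (A.trace.re + B.trace.re) * binEnt (B.trace.re / (A.trace.re + B.trace.re)) := by
  rcases (re_trace_nonneg hA).eq_or_lt' with ha | ha
  · rw [eq_zero_of_re_trace_eq_zero hA ha]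
    rcases eq_or_ne B.trace.re 0 with hb | hb <;> simp [vnEntropy_zero, hb, binEnt]
  rcases (re_trace_nonneg hB).eq_or_lt' with hb | hb
  · simp [eq_zero_of_re_trace_eq_zero hB hb, vnEntropy_zero, binEnt]
  have hmix := sum_mul_vnEntropy_le_add_logb (ι := Bool)
    (A := fun i => cond i (A.trace.re⁻¹ • A) (B.trace.re⁻¹ • B))
    (w := fun i => cond i A.trace.re B.trace.re)
    (by rintro (_ | _)
        exacts [hB.smul (inv_nonneg.2 hb.le), hA.smul (inv_nonneg.2 ha.le)])
    (by rintro (_ | _)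
        exacts [hb.le, ha.le])
    (by simpa using add_pos ha hb)
  simp only [Fintype.sum_bool, cond_true, cond_false, vnEntropy_smul hA.isHermitian,
    vnEntropy_smul hB.isHermitian, smul_smul, mul_inv_cancel₀ ha.ne', mul_inv_cancel₀ hb.ne',
    one_smul, mul_inv_cancel_left₀ ha.ne', mul_inv_cancel_left₀ hb.ne', Real.logb_inv, trace_add,
    Complex.add_re] at hmix
  rw [add_mul_binEnt_div_add ha hb]
  linarith

end VonNeumann

section ConditionalEntropy

variable {X n : Type*} [Fintype X] [Fintype n] [DecidableEq n]

theorem vnEntropy_one_of_unique [Unique n] : vnEntropy (1 : Matrix n n ℂ) = 0 := by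
  simpa [shEnt] using vnEntropy_diagonal (fun _ : n => (1 : ℝ))

theorem outerPr_stdb {X : Type*} [DecidableEq X] (x : X) :
    outerPr (stdb x) = diagonal fun y => ((Pi.single x 1 : X → ℝ) y : ℂ) := by
  ext i j
  by_cases hix : i = x <;> by_cases hjx : j = x <;>
    simp [outerPr, stdb, diagonal_apply, hix, hjx, eq_comm (a := x)]

theorem vnEntropy_outerPr_stdb (x : n) : vnEntropy (outerPr (stdb x)) = 0 := by
  rw [outerPr_stdb, vnEntropy_diagonal, shEnt_single]
  simp

theorem trace_outerPr_stdb (x : n) : (outerPr (stdb x)).trace = 1 := by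
  simp [outerPr_stdb, ← Complex.ofReal_sum]

theorem outerPr_stdb_mul {x y : n} (hxy : x ≠ y) : outerPr (stdb x) * outerPr (stdb y) = 0 := by
  rw [outerPr_stdb, outerPr_stdb, diagonal_mul_diagonal, ← diagonal_zero]
  congr 1
  ext i
  rcases eq_or_ne i x with rfl | hix <;> simp [*]

theorem vnEntropy_sum_outerPr_stdb_kronecker {K : Type*} [Fintype K] [DecidableEq K]
    {e : X → K} (he : Function.Injective e) {B : X → Matrix n n ℂ} (hB : ∀ x, (B x).PosSemidef) :
    vnEntropy (∑ x, outerPr (stdb (e x)) ⊗ₖ B x) = ∑ x, vnEntropy (B x) := by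
  rw [vnEntropy_sum_of_mul_eq_zero fun x => (posSemidef_outerPr _).kronecker (hB x)]
  · refine Finset.sum_congr rfl fun x _ => ?_
    rw [vnEntropy_kronecker (posSemidef_outerPr _).isHermitian (hB x).isHermitian,
      vnEntropy_outerPr_stdb]
    simp [trace_outerPr_stdb]
  · intro x y hxy
    rw [← mul_kronecker_mul, outerPr_stdb_mul (he.ne hxy), zero_kronecker]

/-- The conditional entropy `S(X|E)` of the classical-quantum operator `∑ x, |x⟩⟨x| ⊗ B x`, whose
`XE`-entropy is `∑ x, S(B x)`; the operator need not be normalized. -/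
def cqCondEntropy (B : X → Matrix n n ℂ) : ℝ :=
  ∑ x, vnEntropy (B x) - vnEntropy (∑ x, B x)

theorem cqCondEntropy_nonneg {B : X → Matrix n n ℂ} (hB : ∀ x, (B x).PosSemidef) :
    0 ≤ cqCondEntropy B :=
  sub_nonneg.2 (vnEntropy_sum_le hB)

theorem cqCondEntropy_le {B : X → Matrix n n ℂ} (hB : ∀ x, (B x).PosSemidef) :
    cqCondEntropy B ≤ (∑ x, B x).trace.re * Real.logb 2 (Fintype.card X) := by
  rcases isEmpty_or_nonempty X with _ | _
  · simp [cqCondEntropy, vnEntropy_zero]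
  have hconcave := sum_mul_vnEntropy_le_add_logb hB (w := fun _ => 1) (fun _ => zero_le_one)
    (by simpa using Fintype.card_pos)
  simp only [one_mul, one_smul, Finset.sum_const, Finset.card_univ, nsmul_eq_mul, mul_one]
    at hconcave
  rw [cqCondEntropy]
  linarith

theorem cqCondEntropy_add_le {A B : X → Matrix n n ℂ} (hA : ∀ x, (A x).PosSemidef)
    (hB : ∀ x, (B x).PosSemidef) {a b : ℝ} (ha : (∑ x, A x).trace.re = a)
    (hb : (∑ x, B x).trace.re = b) :
    cqCondEntropy (fun x => A x + B x) ≤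
      cqCondEntropy A + cqCondEntropy B + (a + b) * binEnt (b / (a + b)) := by
  have hjoint : ∑ x, vnEntropy (A x + B x) ≤ ∑ x, vnEntropy (A x) + ∑ x, vnEntropy (B x) := by
    rw [← Finset.sum_add_distrib]
    exact Finset.sum_le_sum fun x _ => vnEntropy_add_le (hA x) (hB x)
  have hmarginal := vnEntropy_add_vnEntropy_le (posSemidef_sum Finset.univ fun x _ => hA x)
    (posSemidef_sum Finset.univ fun x _ => hB x)
  rw [ha, hb] at hmarginal
  simp only [cqCondEntropy, Finset.sum_add_distrib]
  linarith

theorem sum_vnEntropy_add_sum_vnEntropy_le {A B : X → Matrix n n ℂ}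
    (hA : ∀ x, (A x).PosSemidef) (hB : ∀ x, (B x).PosSemidef) {a b : ℝ}
    (ha : (∑ x, A x).trace.re = a) (hb : (∑ x, B x).trace.re = b) :
    ∑ x, vnEntropy (A x) + ∑ x, vnEntropy (B x) ≤
      ∑ x, vnEntropy (A x + B x) + (a + b) * binEnt (b / (a + b)) := by
  classical
  have htrace : ∀ C : X → Matrix n n ℂ,
      (∑ x, outerPr (stdb x) ⊗ₖ C x).trace = (∑ x, C x).trace := fun C => by
    simp [trace_sum, trace_kronecker, trace_outerPr_stdb]
  have hpos : ∀ {C : X → Matrix n n ℂ}, (∀ x, (C x).PosSemidef) →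
      (∑ x, outerPr (stdb x) ⊗ₖ C x).PosSemidef := fun hC =>
    posSemidef_sum _ fun x _ => (posSemidef_outerPr _).kronecker (hC x)
  have hsuper := vnEntropy_add_vnEntropy_le (hpos hA) (hpos hB)
  rw [← Finset.sum_add_distrib] at hsuper
  simp only [← kronecker_add, htrace, ha, hb] at hsuper
  have hentropy : ∀ {C : X → Matrix n n ℂ}, (∀ x, (C x).PosSemidef) →
      vnEntropy (∑ x, outerPr (stdb x) ⊗ₖ C x) = ∑ x, vnEntropy (C x) := fun hC =>
    vnEntropy_sum_outerPr_stdb_kronecker Function.injective_id hC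
  rwa [hentropy hA, hentropy hB, hentropy fun x => (hA x).add (hB x)] at hsuper

-- A form of the Alicki–Fannes–Winter continuity bound that only needs subadditivity and
-- concavity of `S`, because `ρ` and `τ`, and hence `D` and `D'`, have the same marginal.
theorem cqCondEntropy_le_of_add_eq_add {ρ τ D D' : X → Matrix n n ℂ}
    (hρ : ∀ x, (ρ x).PosSemidef) (hτ : ∀ x, (τ x).PosSemidef) (hD : ∀ x, (D x).PosSemidef)
    (hD' : ∀ x, (D' x).PosSemidef) (hadd : ∀ x, ρ x + D' x = τ x + D x)
    (hmarg : ∑ x, ρ x = ∑ x, τ x) (hτ1 : (∑ x, τ x).trace.re = 1) {t : ℝ}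
    (ht : (∑ x, D x).trace.re = t) :
    cqCondEntropy τ ≤
      cqCondEntropy ρ + t * Real.logb 2 (Fintype.card X) + (1 + t) * binEnt (t / (1 + t)) := by
  have hmargD : ∑ x, D' x = ∑ x, D x := by
    have hsum := Finset.sum_congr (rfl : Finset.univ = Finset.univ) fun x _ => hadd x
    rwa [Finset.sum_add_distrib, Finset.sum_add_distrib, hmarg, add_right_inj] at hsum
  have hsub : ∑ x, vnEntropy (τ x + D x) ≤ ∑ x, vnEntropy (ρ x) + ∑ x, vnEntropy (D' x) := by
    rw [← Finset.sum_add_distrib]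
    exact Finset.sum_le_sum fun x _ => (hadd x) ▸ vnEntropy_add_le (hρ x) (hD' x)
  have hsuper := sum_vnEntropy_add_sum_vnEntropy_le hτ hD hτ1 ht
  have hDnonneg := cqCondEntropy_nonneg hD
  have hD'le := cqCondEntropy_le hD'
  rw [cqCondEntropy] at hDnonneg
  rw [cqCondEntropy, hmargD, ht] at hD'le
  rw [cqCondEntropy, cqCondEntropy, hmarg]
  linarith

theorem cqCondEntropy_const {R : Matrix n n ℂ} (hR : R.IsHermitian) (hR1 : R.trace.re = 1)
    [Nonempty X] :
    cqCondEntropy (fun _ : X => (Fintype.card X : ℝ)⁻¹ • R) = Real.logb 2 (Fintype.card X) := by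
  have hcard : (Fintype.card X : ℝ) ≠ 0 := Nat.cast_ne_zero.2 Fintype.card_ne_zero
  simp only [cqCondEntropy, Finset.sum_const, Finset.card_univ, ← Nat.cast_smul_eq_nsmul ℝ,
    smul_smul, mul_inv_cancel₀ hcard, one_smul, vnEntropy_smul hR, hR1, Real.logb_inv, smul_eq_mul,
    mul_inv_cancel_left₀ hcard]
  ring

theorem cqCondEntropy_diagonal (P : X → n → ℝ) :
    cqCondEntropy (fun x => diagonal fun y => (P x y : ℂ)) =
      ∑ x, shEnt (P x) - shEnt (∑ x, P x) := by
  simp only [cqCondEntropy, sum_diagonal_ofReal, vnEntropy_diagonal]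

theorem cqCondEntropy_diagonal_single [DecidableEq X] (p : X → ℝ) :
    cqCondEntropy (fun x => diagonal fun y => ((Pi.single x (p x) : X → ℝ) y : ℂ)) = 0 := by
  simp only [cqCondEntropy_diagonal, shEnt_single, Finset.univ_sum_single]
  rw [shEnt, sub_self]

theorem re_trace_sum_diagonal_ofReal (P : X → n → ℝ) :
    (∑ x, diagonal (fun y => (P x y : ℂ))).trace.re = ∑ x, ∑ y, P x y := by
  simp [trace_sum, Complex.re_sum]

-- Fano's inequality: the diagonal part of `P` has zero conditional entropy.
theorem cqCondEntropy_diagonal_le [DecidableEq X] {P : X → X → ℝ} (hP : ∀ x y, 0 ≤ P x y)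
    (hP1 : ∑ x, ∑ y, P x y = 1) :
    cqCondEntropy (fun x => diagonal fun y => (P x y : ℂ)) ≤
      (1 - ∑ x, P x x) * Real.logb 2 (Fintype.card X) + binEnt (1 - ∑ x, P x x) := by
  let correct : X → X → ℝ := fun x => Pi.single x (P x x)
  let error : X → X → ℝ := fun x => P x - correct x
  have hcorrect : ∀ x, 0 ≤ correct x := fun x => Pi.single_nonneg.2 (hP x x)
  have herror : ∀ x, 0 ≤ error x := fun x y => by
    rcases eq_or_ne y x with rfl | hyx
    · simp [error, correct]
    · simpa [error, correct, hyx] using hP x y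
  have hcorrect_sum : ∑ x, ∑ y, correct x y = ∑ x, P x x := by simp [correct]
  have herror_sum : ∑ x, ∑ y, error x y = 1 - ∑ x, P x x := by
    simp only [error, Pi.sub_apply, Finset.sum_sub_distrib, hP1, hcorrect_sum]
  have hsplit : (fun x => diagonal fun y => (P x y : ℂ)) = fun x =>
      (diagonal fun y => (correct x y : ℂ)) + diagonal fun y => (error x y : ℂ) := by
    simp [error]
  have hadd := cqCondEntropy_add_le (fun x => posSemidef_diagonal_ofReal (hcorrect x))
    (fun x => posSemidef_diagonal_ofReal (herror x))
    ((re_trace_sum_diagonal_ofReal correct).trans hcorrect_sum)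
    ((re_trace_sum_diagonal_ofReal error).trans herror_sum)
  have herror_le := cqCondEntropy_le fun x => posSemidef_diagonal_ofReal (herror x)
  rw [re_trace_sum_diagonal_ofReal, herror_sum] at herror_le
  rw [← hsplit, cqCondEntropy_diagonal_single, add_sub_cancel, div_one] at hadd
  linarith

end ConditionalEntropy

section Mixtures

variable {k v n ι X Y E : Type*} [Fintype k] [DecidableEq k] [Fintype v] [DecidableEq v]
  [Fintype n] [DecidableEq n] [Fintype E] [DecidableEq E] [Fintype ι] [Fintype X] [Fintype Y]

theorem IsDensity.kronecker {A : Matrix k k ℂ} {B : Matrix n n ℂ} (hA : IsDensity A)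
    (hB : IsDensity B) : IsDensity (A ⊗ₖ B) :=
  ⟨hA.1.kronecker hB.1, by rw [trace_kronecker, hA.2, hB.2, one_mul]⟩

theorem IsDensity.vnEntropy_kronecker {A : Matrix k k ℂ} {B : Matrix n n ℂ} (hA : IsDensity A)
    (hB : IsDensity B) : vnEntropy (A ⊗ₖ B) = vnEntropy A + vnEntropy B := by
  simp [_root_.vnEntropy_kronecker hA.1.isHermitian hB.1.isHermitian, hA.2, hB.2]

theorem isDensity_outerPr_stdb (x : n) : IsDensity (outerPr (stdb x)) :=
  ⟨posSemidef_outerPr _, trace_outerPr_stdb x⟩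

theorem isDensity_one_of_unique [Unique n] : IsDensity (1 : Matrix n n ℂ) :=
  ⟨PosSemidef.one, by simp⟩

theorem isDensity_sum_sum_smul {P : X → Y → ℝ} (hP : ∀ x y, 0 ≤ P x y)
    (hP1 : ∑ x, ∑ y, P x y = 1) {A : X → Y → Matrix n n ℂ} (hA : ∀ x y, IsDensity (A x y)) :
    IsDensity (∑ x, ∑ y, P x y • A x y) := by
  refine ⟨posSemidef_sum _ fun x _ => posSemidef_sum _ fun y _ => (hA x y).1.smul (hP x y), ?_⟩
  simp only [trace_sum, trace_smul, (hA _ _).2, ← Finset.sum_smul, hP1, one_smul]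

theorem vnEntropy_sum_smul_le {A : ι → Matrix n n ℂ} (hA : ∀ i, IsDensity (A i)) {p : ι → ℝ}
    (hp : ∀ i, 0 ≤ p i) :
    vnEntropy (∑ i, p i • A i) ≤ ∑ i, p i * vnEntropy (A i) + shEnt p := by
  refine (vnEntropy_sum_le fun i => (hA i).1.smul (hp i)).trans_eq ?_
  rw [shEnt, ← Finset.sum_add_distrib]
  refine Finset.sum_congr rfl fun i _ => ?_
  rw [vnEntropy_smul (hA i).1.isHermitian, (hA i).2, Complex.one_re]
  ring

/-- The conditional entropy `S(U|VW)` of the state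
`∑ x, ∑ y, P x y • (σU x ⊗ₖ (σV x ⊗ₖ σW x y))`. `Mmeas` maximizes the difference of its values at
`W = E` and at `W` a classical copy of `Y`. -/
def mixtureCondEntropy (P : X → Y → ℝ) (σU : X → Matrix k k ℂ) (σV : X → Matrix v v ℂ)
    (σW : X → Y → Matrix n n ℂ) : ℝ :=
  vnEntropy (∑ x, ∑ y, P x y • (σU x ⊗ₖ (σV x ⊗ₖ σW x y))) -
    vnEntropy (∑ x, ∑ y, P x y • (σV x ⊗ₖ σW x y))

theorem abs_mixtureCondEntropy_sub_le {P : X → Y → ℝ} (hP : ∀ x y, 0 ≤ P x y)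
    (hP1 : ∑ x, ∑ y, P x y = 1) {σU : X → Matrix k k ℂ} (hU : ∀ x, IsDensity (σU x))
    {σV : X → Matrix v v ℂ} (hV : ∀ x, IsDensity (σV x)) {σW : X → Y → Matrix n n ℂ}
    (hW : ∀ x y, IsDensity (σW x y)) :
    |mixtureCondEntropy P σU σV σW - ∑ x, ∑ y, P x y * vnEntropy (σU x)| ≤
      shEnt fun q : X × Y => P q.1 q.2 := by
  have hp : ∀ q : X × Y, 0 ≤ P q.1 q.2 := fun q => hP q.1 q.2
  have hp1 : ∑ q : X × Y, P q.1 q.2 = 1 := by rw [Fintype.sum_prod_type, hP1]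
  have hVW : ∀ q : X × Y, IsDensity (σV q.1 ⊗ₖ σW q.1 q.2) := fun q =>
    (hV q.1).kronecker (hW q.1 q.2)
  have hUVW : ∀ q : X × Y, IsDensity (σU q.1 ⊗ₖ (σV q.1 ⊗ₖ σW q.1 q.2)) := fun q =>
    (hU q.1).kronecker (hVW q)
  have hUVW_le := vnEntropy_sum_smul_le hUVW hp
  have hUVW_ge := sum_mul_vnEntropy_le (fun q => (hUVW q).1) hp hp1
  have hVW_le := vnEntropy_sum_smul_le hVW hp
  have hVW_ge := sum_mul_vnEntropy_le (fun q => (hVW q).1) hp hp1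
  simp only [fun q => (hU q.1).vnEntropy_kronecker (hVW q), mul_add, Finset.sum_add_distrib,
    Fintype.sum_prod_type] at hUVW_le hUVW_ge hVW_le hVW_ge
  rw [mixtureCondEntropy, abs_le]
  constructor <;> linarith

theorem mixtureCondEntropy_sub_le_Mmeas [DecidableEq Y] {P : X → Y → ℝ}
    {σE : X → Y → Matrix E E ℂ} (hP : ∀ x y, 0 ≤ P x y) (hP1 : ∑ x, ∑ y, P x y = 1)
    (hσ : ∀ x y, IsDensity (σE x y)) {dU dV : ℕ} {σU : X → Matrix (Fin dU) (Fin dU) ℂ}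
    {σV : X → Matrix (Fin dV) (Fin dV) ℂ} (hU : ∀ x, IsDensity (σU x))
    (hV : ∀ x, IsDensity (σV x)) :
    mixtureCondEntropy P σU σV σE - mixtureCondEntropy P σU σV (fun _ y => outerPr (stdb y)) ≤
      Mmeas P σE := by
  refine le_csSup ⟨2 * shEnt fun q : X × Y => P q.1 q.2, ?_⟩ ⟨dU, dV, σU, σV, hU, hV, rfl⟩
  rintro r ⟨dU, dV, σU, σV, hU, hV, rfl⟩
  have hE := abs_le.1 (abs_mixtureCondEntropy_sub_le hP hP1 hU hV hσ)
  have hY := abs_le.1 <| abs_mixtureCondEntropy_sub_le hP hP1 hU hV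
    fun _ y => isDensity_outerPr_stdb (n := Y) y
  simp only [mixtureCondEntropy] at hE hY
  linarith

theorem mixtureCondEntropy_copy [Unique v] {e : X → k} (he : Function.Injective e)
    {P : X → Y → ℝ} (hP : ∀ x y, 0 ≤ P x y) {σW : X → Y → Matrix n n ℂ}
    (hW : ∀ x y, (σW x y).PosSemidef) :
    mixtureCondEntropy P (fun x => outerPr (stdb (e x))) (fun _ => (1 : Matrix v v ℂ)) σW =
      cqCondEntropy fun x => ∑ y, P x y • σW x y := by
  have hmarg : ∀ x, (∑ y, P x y • σW x y).PosSemidef := fun x =>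
    posSemidef_sum _ fun y _ => (hW x y).smul (hP x y)
  have hone : ∀ {B : Matrix n n ℂ}, B.PosSemidef →
      vnEntropy ((1 : Matrix v v ℂ) ⊗ₖ B) = vnEntropy B := fun hB => by
    simp [vnEntropy_kronecker isHermitian_one hB.isHermitian, vnEntropy_one_of_unique]
  have hsum : ∑ x, (1 : Matrix v v ℂ) ⊗ₖ ∑ y, P x y • σW x y =
      (1 : Matrix v v ℂ) ⊗ₖ ∑ x, ∑ y, P x y • σW x y := by
    simpa only [one_smul] using
      sum_smul_kronecker (1 : Matrix v v ℂ) (fun _ => 1) fun x => ∑ y, P x y • σW x y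
  simp only [mixtureCondEntropy, cqCondEntropy, sum_smul_kronecker, hsum]
  rw [vnEntropy_sum_outerPr_stdb_kronecker he fun x => PosSemidef.one.kronecker (hmarg x),
    hone (posSemidef_sum _ fun x _ => hmarg x)]
  simp only [hone (hmarg _)]

theorem sum_smul_outerPr_stdb (p : n → ℝ) :
    ∑ y, p y • outerPr (stdb y) = diagonal fun y => (p y : ℂ) := by
  ext i j
  rcases eq_or_ne i j with rfl | hij
  · simp [Matrix.sum_apply, outerPr, stdb]
  · simp [Matrix.sum_apply, outerPr, stdb, hij]

theorem cqCondEntropy_sub_le_Mmeas [DecidableEq Y] {P : X → Y → ℝ} {σE : X → Y → Matrix E E ℂ}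
    (hP : ∀ x y, 0 ≤ P x y) (hP1 : ∑ x, ∑ y, P x y = 1) (hσ : ∀ x y, IsDensity (σE x y)) :
    cqCondEntropy (fun x => ∑ y, P x y • σE x y) -
      cqCondEntropy (fun x => diagonal fun y => (P x y : ℂ)) ≤ Mmeas P σE := by
  have hcopy := mixtureCondEntropy_sub_le_Mmeas hP hP1 hσ (dV := 1) (σV := fun _ => 1)
    (fun x => isDensity_outerPr_stdb (Fintype.equivFin X x)) fun _ => isDensity_one_of_unique
  rw [mixtureCondEntropy_copy (Fintype.equivFin X).injective hP fun x y => (hσ x y).1,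
    mixtureCondEntropy_copy (Fintype.equivFin X).injective hP fun _ _ => posSemidef_outerPr _]
    at hcopy
  simpa only [sum_smul_outerPr_stdb] using hcopy

end Mixtures

section TraceDistance

variable {n X Y E : Type*} [Fintype n] [DecidableEq n]

theorem exists_posSemidef_sub_eq {T : Matrix n n ℂ} (hT : T.IsHermitian) :
    ∃ A B : Matrix n n ℂ, A.PosSemidef ∧ B.PosSemidef ∧ T = A - B ∧
      A.trace.re + B.trace.re = ∑ i, |eigs T i| := by
  obtain ⟨U, hU, hTU⟩ := exists_unitary_diagonalization hT
  let conj (d : n → ℝ) : Matrix n n ℂ := U * diagonal (fun i => (d i : ℂ)) * Uᴴ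
  have hpos : ∀ {d : n → ℝ}, 0 ≤ d → (conj d).PosSemidef := fun hd =>
    (posSemidef_diagonal_ofReal hd).mul_mul_conjTranspose_same U
  have htrace : ∀ d : n → ℝ, (conj d).trace.re = ∑ i, d i := fun d => by
    rw [trace_mul_comm, ← Matrix.mul_assoc, ← star_eq_conjTranspose,
      mem_unitaryGroup_iff'.1 hU, Matrix.one_mul, trace_diagonal]
    simp
  have hsub : ∀ d e : n → ℝ, conj d - conj e = conj (d - e) := fun d e => by
    simp only [conj, ← Matrix.sub_mul, ← Matrix.mul_sub, diagonal_sub, Pi.sub_apply,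
      Complex.ofReal_sub]
  refine ⟨conj (eigs T)⁺, conj (eigs T)⁻, hpos (posPart_nonneg _), hpos (negPart_nonneg _),
    ?_, ?_⟩
  · rw [hsub, posPart_sub_negPart]
    exact hTU
  · rw [htrace, htrace, ← Finset.sum_add_distrib]
    refine Finset.sum_congr rfl fun i _ => ?_
    rw [← Pi.add_apply, posPart_add_negPart, Pi.abs_apply]

theorem exists_posSemidef_add_eq_add {ρ σ : Matrix n n ℂ} (hρ : IsDensity ρ) (hσ : IsDensity σ) :
    ∃ A B : Matrix n n ℂ, A.PosSemidef ∧ B.PosSemidef ∧ ρ + B = σ + A ∧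
      A.trace.re = traceDist ρ σ ∧ B.trace.re = traceDist ρ σ := by
  obtain ⟨A, B, hA, hB, hsub, htrace⟩ :=
    exists_posSemidef_sub_eq (hρ.1.isHermitian.sub hσ.1.isHermitian)
  have htrace_eq : A.trace = B.trace := by
    rw [← sub_eq_zero, ← trace_sub, ← hsub, trace_sub, hρ.2, hσ.2, sub_self]
  refine ⟨A, B, hA, hB, (sub_eq_sub_iff_add_eq_add.1 hsub).trans (add_comm A σ), ?_, ?_⟩
  all_goals
    rw [traceDist, ← htrace, htrace_eq]
    ring

variable [Fintype X] [DecidableEq X] [Fintype Y] [DecidableEq Y]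

/-- The ccq-state `∑ x, ∑ y, P x y • |x⟩⟨x| ⊗ |y⟩⟨y| ⊗ σ x y`. -/
def ccqState (P : X → Y → ℝ) (σ : X → Y → Matrix E E ℂ) :
    Matrix (X × Y × E) (X × Y × E) ℂ :=
  ∑ x, ∑ y, P x y • (outerPr (stdb x) ⊗ₖ (outerPr (stdb y) ⊗ₖ σ x y))

/-- The block of an operator on `X × Y × E` at the classical values `x`, `y`, i.e. the operator
`⟨x, y| M |x, y⟩` on `E`. -/
def diagBlock {X Y E : Type*} (M : Matrix (X × Y × E) (X × Y × E) ℂ) (x : X) (y : Y) :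
    Matrix E E ℂ :=
  M.submatrix (fun e => (x, y, e)) fun e => (x, y, e)

theorem diagBlock_ccqState (P : X → Y → ℝ) (σ : X → Y → Matrix E E ℂ) (x : X) (y : Y) :
    diagBlock (ccqState P σ) x y = P x y • σ x y := by
  ext i j
  simp [diagBlock, ccqState, Matrix.sum_apply, outerPr, stdb]

variable [Fintype E] [DecidableEq E]

theorem isDensity_ccqState {P : X → Y → ℝ} (hP : ∀ x y, 0 ≤ P x y) (hP1 : ∑ x, ∑ y, P x y = 1)
    {σ : X → Y → Matrix E E ℂ} (hσ : ∀ x y, IsDensity (σ x y)) : IsDensity (ccqState P σ) :=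
  isDensity_sum_sum_smul hP hP1 fun x y => (isDensity_outerPr_stdb x).kronecker
    ((isDensity_outerPr_stdb y).kronecker (hσ x y))

theorem exists_blocks_add_eq_add {P Q : X → Y → ℝ} {σ τ : X → Y → Matrix E E ℂ}
    (hP : IsDensity (ccqState P σ)) (hQ : IsDensity (ccqState Q τ)) :
    ∃ A B : X → Y → Matrix E E ℂ, (∀ x y, (A x y).PosSemidef) ∧ (∀ x y, (B x y).PosSemidef) ∧
      (∀ x y, P x y • σ x y + B x y = Q x y • τ x y + A x y) ∧
      ∑ x, ∑ y, (A x y).trace.re = traceDist (ccqState P σ) (ccqState Q τ) ∧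
      ∑ x, ∑ y, (B x y).trace.re = traceDist (ccqState P σ) (ccqState Q τ) := by
  obtain ⟨A, B, hA, hB, hadd, hAtr, hBtr⟩ := exists_posSemidef_add_eq_add hP hQ
  have htrace : ∀ M : Matrix (X × Y × E) (X × Y × E) ℂ,
      ∑ x, ∑ y, (diagBlock M x y).trace.re = M.trace.re := fun M => by
    simp [Matrix.trace, diagBlock, Fintype.sum_prod_type]
  refine ⟨diagBlock A, diagBlock B, fun _ _ => hA.submatrix _, fun _ _ => hB.submatrix _,
    fun x y => ?_, (htrace A).trans hAtr, (htrace B).trans hBtr⟩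
  rw [← diagBlock_ccqState P σ, ← diagBlock_ccqState Q τ]
  exact congrArg (diagBlock · x y) hadd

end TraceDistance

section SecureKey

variable {X E : Type*} [Fintype X] [DecidableEq X]

/-- The joint distribution of a uniformly distributed pair of identical keys. -/
def idealKey (X : Type*) [Fintype X] [DecidableEq X] (a b : X) : ℝ :=
  if a = b then (Fintype.card X : ℝ)⁻¹ else 0

theorem idealKey_nonneg (a b : X) : 0 ≤ idealKey X a b := by
  unfold idealKey
  positivity

theorem sum_idealKey_apply (a : X) : ∑ b, idealKey X a b = (Fintype.card X : ℝ)⁻¹ := by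
  simp [idealKey]

theorem sum_idealKey [Nonempty X] : ∑ a, ∑ b, idealKey X a b = 1 := by
  simp [sum_idealKey_apply]

theorem sum_idealKey_self [Nonempty X] : ∑ a, idealKey X a a = 1 := by
  simp [idealKey]

theorem ccqState_idealKey (R : Matrix E E ℂ) :
    ccqState (idealKey X) (fun _ _ => R) = ∑ s, (Fintype.card X : ℝ)⁻¹ •
      (outerPr (stdb s) ⊗ₖ (outerPr (stdb s) ⊗ₖ R)) := by
  simp [ccqState, idealKey, ite_smul]

variable [Fintype E] [DecidableEq E]

theorem sum_diag_sub_sum_diag_le_traceDist {P Q : X → X → ℝ} {σ τ : X → X → Matrix E E ℂ}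
    (hσ : ∀ x y, IsDensity (σ x y)) (hτ : ∀ x y, IsDensity (τ x y))
    (hP : IsDensity (ccqState P σ)) (hQ : IsDensity (ccqState Q τ)) :
    ∑ x, Q x x - ∑ x, P x x ≤ traceDist (ccqState P σ) (ccqState Q τ) := by
  obtain ⟨A, B, hA, hB, hadd, -, hBtr⟩ := exists_blocks_add_eq_add hP hQ
  have hdiag : ∀ x, Q x x - P x x ≤ (B x x).trace.re := fun x => by
    have htrace := congrArg (fun M => M.trace.re) (hadd x x)
    simp only [trace_add, trace_smul, (hσ x x).2, (hτ x x).2, Complex.add_re, Complex.smul_re,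
      Complex.one_re, smul_eq_mul, mul_one] at htrace
    linarith [re_trace_nonneg (hA x x)]
  calc ∑ x, Q x x - ∑ x, P x x
      = ∑ x, (Q x x - P x x) := (Finset.sum_sub_distrib ..).symm
    _ ≤ ∑ x, ∑ y, (B x y).trace.re := Finset.sum_le_sum fun x _ => (hdiag x).trans <|
        Finset.single_le_sum (fun y _ => re_trace_nonneg (hB x y)) (Finset.mem_univ x)
    _ = traceDist (ccqState P σ) (ccqState Q τ) := hBtr

/-- The key pair of the ccq-state `ccqState P σ` is `ε`-secure: the state is `ε`-close to a uniform
pair of identical keys that is independent of the `E`-marginal. -/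
def IsSecureKey (P : X → X → ℝ) (σ : X → X → Matrix E E ℂ) (ε : ℝ) : Prop :=
  traceDist (ccqState P σ) (ccqState (idealKey X) fun _ _ => ∑ a, ∑ b, P a b • σ a b) ≤ ε

variable {P : X → X → ℝ} {σ : X → X → Matrix E E ℂ} {ε : ℝ}

theorem IsSecureKey.one_sub_sum_diag_le (h : IsSecureKey P σ ε) (hP : ∀ x y, 0 ≤ P x y)
    (hP1 : ∑ x, ∑ y, P x y = 1) (hσ : ∀ x y, IsDensity (σ x y)) :
    1 - ∑ x, P x x ≤ ε := by
  have := nonempty_of_sum_eq_one hP1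
  have hR := isDensity_sum_sum_smul hP hP1 hσ
  have hdiag := sum_diag_sub_sum_diag_le_traceDist hσ (fun _ _ => hR)
    (isDensity_ccqState hP hP1 hσ) (isDensity_ccqState idealKey_nonneg sum_idealKey fun _ _ => hR)
  rw [sum_idealKey_self] at hdiag
  exact hdiag.trans h

theorem IsSecureKey.cqCondEntropy_diagonal_le (h : IsSecureKey P σ ε) (hP : ∀ x y, 0 ≤ P x y)
    (hP1 : ∑ x, ∑ y, P x y = 1) (hσ : ∀ x y, IsDensity (σ x y)) (hε : ε ≤ 1 / 2) :
    cqCondEntropy (fun x => diagonal fun y => (P x y : ℂ)) ≤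
      ε * Real.logb 2 (Fintype.card X) + binEnt ε := by
  have := nonempty_of_sum_eq_one hP1
  have herror := h.one_sub_sum_diag_le hP hP1 hσ
  have herror_nonneg : 0 ≤ 1 - ∑ x, P x x := by
    rw [← hP1, ← Finset.sum_sub_distrib]
    exact Finset.sum_nonneg fun x _ => sub_nonneg.2 <|
      Finset.single_le_sum (fun y _ => hP x y) (Finset.mem_univ x)
  have hlog : 0 ≤ Real.logb 2 (Fintype.card X) :=
    Real.logb_nonneg one_lt_two (mod_cast Fintype.card_pos)
  calc cqCondEntropy (fun x => diagonal fun y => (P x y : ℂ))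
      ≤ (1 - ∑ x, P x x) * Real.logb 2 (Fintype.card X) + binEnt (1 - ∑ x, P x x) :=
        _root_.cqCondEntropy_diagonal_le hP hP1
    _ ≤ ε * Real.logb 2 (Fintype.card X) + binEnt ε := by
        gcongr
        exact monotoneOn_binEnt ⟨herror_nonneg, herror.trans hε⟩
          ⟨herror_nonneg.trans herror, hε⟩ herror

theorem IsSecureKey.le_cqCondEntropy (h : IsSecureKey P σ ε) (hP : ∀ x y, 0 ≤ P x y)
    (hP1 : ∑ x, ∑ y, P x y = 1) (hσ : ∀ x y, IsDensity (σ x y)) (hε : ε ≤ 1 / 2) :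
    (1 - ε) * Real.logb 2 (Fintype.card X) - (1 + ε) * binEnt ε ≤
      cqCondEntropy fun x => ∑ y, P x y • σ x y := by
  have := nonempty_of_sum_eq_one hP1
  set R := ∑ a, ∑ b, P a b • σ a b with hR
  have hRdens : IsDensity R := isDensity_sum_sum_smul hP hP1 hσ
  obtain ⟨A, B, hA, hB, hadd, hAtr, -⟩ :=
    exists_blocks_add_eq_add (isDensity_ccqState hP hP1 hσ)
      (isDensity_ccqState idealKey_nonneg sum_idealKey fun _ _ : X => hRdens)
  set t := traceDist (ccqState P σ) (ccqState (idealKey X) fun _ _ => R)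
  have ht : 0 ≤ t := hAtr ▸ Finset.sum_nonneg fun x _ => Finset.sum_nonneg fun y _ =>
    re_trace_nonneg (hA x y)
  have hAFW := cqCondEntropy_le_of_add_eq_add (ρ := fun x => ∑ y, P x y • σ x y)
    (τ := fun _ => (Fintype.card X : ℝ)⁻¹ • R) (D := fun x => ∑ y, A x y)
    (D' := fun x => ∑ y, B x y)
    (fun x => posSemidef_sum _ fun y _ => (hσ x y).1.smul (hP x y))
    (fun _ => hRdens.1.smul (by positivity)) (fun x => posSemidef_sum _ fun y _ => hA x y)
    (fun x => posSemidef_sum _ fun y _ => hB x y)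
    (fun x => by
      rw [← Finset.sum_add_distrib, ← sum_idealKey_apply x, Finset.sum_smul,
        ← Finset.sum_add_distrib]
      exact Finset.sum_congr rfl fun y _ => hadd x y)
    (by simp [← hR, ← Nat.cast_smul_eq_nsmul ℝ, smul_smul])
    (by simp [← Nat.cast_smul_eq_nsmul ℝ, smul_smul, hRdens.2])
    (t := t) (by simpa only [trace_sum, Complex.re_sum] using hAtr)
  rw [cqCondEntropy_const hRdens.1.isHermitian (by rw [hRdens.2, Complex.one_re])] at hAFW
  have hbinEnt := one_add_mul_binEnt_div_le ht h hε
  have hlog : t * Real.logb 2 (Fintype.card X) ≤ ε * Real.logb 2 (Fintype.card X) :=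
    mul_le_mul_of_nonneg_right h (Real.logb_nonneg one_lt_two (mod_cast Fintype.card_pos))
  linarith

end SecureKey

theorem M_lower_bound_of_secure_key_general {X E : Type*} [Fintype X] [DecidableEq X] [Fintype E]
    [DecidableEq E] {P : X → X → ℝ} (hP : ∀ a b, 0 ≤ P a b) (hP1 : ∑ a, ∑ b, P a b = 1)
    {σ : X → X → Matrix E E ℂ} (hσ : ∀ a b, IsDensity (σ a b)) {ε : ℝ} (hε : ε ≤ 1 / 2)
    (hsecure : IsSecureKey P σ ε) :
    (1 - 2 * ε) * Real.logb 2 (Fintype.card X) - (2 + ε) * binEnt ε ≤ Mmeas P σ := by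
  have hE := hsecure.le_cqCondEntropy hP hP1 hσ hε
  have hY := hsecure.cqCondEntropy_diagonal_le hP hP1 hσ hε
  have hM := cqCondEntropy_sub_le_Mmeas hP hP1 hσ
  linarith

theorem key_rate_le {ε L : ℝ} (hε0 : 0 ≤ ε) (hε : ε ≤ 1 / 2) (hL : 1 ≤ L) :
    (1 - ε - 2 * binEnt ε - Real.sqrt (2 * ε)) * L - 1 / Real.exp 1 ≤
      (1 - 2 * ε) * L - (2 + ε) * binEnt ε := by
  have hsqrt : 2 * ε ≤ Real.sqrt (2 * ε) := Real.le_sqrt_of_sq_le (by nlinarith)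
  have hbinEnt : 0 ≤ binEnt ε := binEnt_nonneg hε0 (by linarith)
  have hεbinEnt : ε * binEnt ε ≤ ε * L :=
    mul_le_mul_of_nonneg_left ((binEnt_le_one ε).trans hL) hε0
  have hbinEntL : binEnt ε ≤ binEnt ε * L := le_mul_of_one_le_right hbinEnt hL
  have hsqrtL : 2 * ε * L ≤ Real.sqrt (2 * ε) * L :=
    mul_le_mul_of_nonneg_right hsqrt (zero_le_one.trans hL)
  have hexp : 0 ≤ 1 / Real.exp 1 := by positivity
  linarith

/-- for an ε-secure key pair `(S_A, S_B)` of length `ℓ` with adversary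
system `E`, `M(S_A;S_B;E) ≥ (1 - ε - 2h(ε) - √(2ε))·ℓ - 1/e`. -/
theorem M_lower_bound_of_secure_key
    {l dE : ℕ} (hl : 1 ≤ l) (ε : ℝ) (hε0 : 0 ≤ ε) (hε : ε ≤ 1 / 2)
    (P : (Fin l → Bool) → (Fin l → Bool) → ℝ)
    (hP0 : ∀ a b, 0 ≤ P a b) (hP1 : ∑ a, ∑ b, P a b = 1)
    (ρE : (Fin l → Bool) → (Fin l → Bool) → Matrix (Fin dE) (Fin dE) ℂ)
    (hρE : ∀ a b, IsDensity (ρE a b))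
    (hsecure : traceDist
      (∑ a, ∑ b, P a b • (outerPr (stdb a) ⊗ₖ (outerPr (stdb b) ⊗ₖ ρE a b)))
      (∑ s : Fin l → Bool, ((2 : ℝ) ^ l)⁻¹ •
        (outerPr (stdb s) ⊗ₖ (outerPr (stdb s) ⊗ₖ (∑ a, ∑ b, P a b • ρE a b)))) ≤ ε) :
    Mmeas P ρE ≥ (1 - ε - 2 * binEnt ε - Real.sqrt (2 * ε)) * l - 1 / Real.exp 1 := by
  have hcard : (Fintype.card (Fin l → Bool) : ℝ) = 2 ^ l := by simp
  have hgeneral := M_lower_bound_of_secure_key_general hP0 hP1 hρE hε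
    (by rwa [IsSecureKey, ccqState_idealKey, hcard])
  rw [hcard, Real.logb_pow, Real.logb_self_eq_one one_lt_two, mul_one] at hgeneral
  exact (key_rate_le hε0 hε (mod_cast hl)).trans hgeneral
end
end
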